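/- arXiv:math/0405052 — 2 statements merged into one kernel-verified Lean document; each statement's English description precedes it below -/
import Mathlib

section
/- Let D ≤ G be a 2-Sylow subgroup (so |D| = 8). Then there exist algebraically independent homogeneous invariants f'_1, …, f'_6 ∈ S[W'^*]^D of degrees 1, 1, 2, 2, 2, 4 and homogeneous invariants g'_1 = 1, g'_2, g'_3, g'_4 ∈ S[W'^*]^D of degrees 0, 3, 3, 6 such that S[W'^*]^D is a free F_2[f'_1, …, f'_6]-module with basis {g'_1, g'_2, g'_3, g'_4}; in particular S[W'^*]^D is Cohen-Macaulay. -/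
set_option synthInstance.maxHeartbeats 1000000
set_option maxHeartbeats 1000000

open MvPolynomial

/-- The field with two elements. -/
abbrev F2 := ZMod 2

/-- `G = GL₃(𝔽₂)`. -/
abbrev G3 := GL (Fin 3) F2

/-- The generator `A` of `G`. -/
def Agen : G3 := ⟨!![1,0,1; 0,1,0; 0,0,1], !![1,0,1; 0,1,0; 0,0,1], by decide, by decide⟩

/-- The generator `B` of `G`. -/
def Bgen : G3 := ⟨!![0,0,1; 1,0,0; 0,1,0], !![0,1,0; 0,0,1; 1,0,0], by decide, by decide⟩

/-- The matrix `D(A)` of the action on `W'^* = 𝔽₂⁶`. -/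
def DA6 : Matrix (Fin 6) (Fin 6) F2 :=
  !![1,0,1,0,0,1; 0,1,0,0,0,0; 0,0,1,0,0,0; 0,0,0,1,1,0; 0,0,0,0,1,0; 0,0,0,0,0,1]

/-- The matrix `D(B)` of the action on `W'^* = 𝔽₂⁶`. -/
def DB6 : Matrix (Fin 6) (Fin 6) F2 :=
  !![0,0,1,0,0,0; 1,0,0,0,0,0; 0,1,0,0,0,0; 0,0,0,0,0,1; 0,0,0,1,0,0; 0,0,0,0,1,0]

/-- The algebra endomorphism of `S[W'^*] = 𝔽₂[a,b,c,d,e,f]` induced by the right action of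
`σ` on the linear forms (coefficient row vectors are multiplied on the right by `D σ`; in
particular the variable `Xᵢ` is sent to the linear form given by the `i`-th row of `D σ`). -/
noncomputable def polyAct (D : G3 →* GL (Fin 6) F2) (σ : G3) :
    MvPolynomial (Fin 6) F2 →ₐ[F2] MvPolynomial (Fin 6) F2 :=
  aeval (fun i => ∑ j, (D σ : Matrix (Fin 6) (Fin 6) F2) i j • X j)

/-- The invariant ring `S[W'^*]^H` for a subgroup `H ≤ G`. -/
noncomputable def invH (D : G3 →* GL (Fin 6) F2) (H : Subgroup G3) :
    Subalgebra F2 (MvPolynomial (Fin 6) F2) where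
  carrier := {p | ∀ σ ∈ H, polyAct D σ p = p}
  mul_mem' := fun ha hb σ hσ => by rw [map_mul, ha σ hσ, hb σ hσ]
  add_mem' := fun ha hb σ hσ => by rw [map_add, ha σ hσ, hb σ hσ]
  one_mem' := fun σ _ => map_one _
  zero_mem' := fun σ _ => map_zero _
  algebraMap_mem' := fun r σ _ => AlgHom.commutes _ r

/-- The invariant ring `S[W'^*]^G`. -/
noncomputable def invG (D : G3 →* GL (Fin 6) F2) :
    Subalgebra F2 (MvPolynomial (Fin 6) F2) :=
  invH D ⊤

namespace MonomialOrder

/-- Nonzero polynomials with pairwise distinct leading exponents are linearly independent. -/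
theorem coeff_eq_zero_of_sum_smul_eq_zero {σ K ι : Type*} [Field K] (m : MonomialOrder σ)
    {s : Finset ι} {c : ι → K} {v : ι → MvPolynomial σ K} (hne : ∀ x ∈ s, v x ≠ 0)
    (hinj : Set.InjOn (fun x => m.degree (v x)) s) (hsum : ∑ x ∈ s, c x • v x = 0) :
    ∀ x ∈ s, c x = 0 := by
  classical
  by_contra! hcon
  obtain ⟨y, hys, hyc⟩ := hcon
  obtain ⟨x, hx, hmax⟩ := (s.filter (fun x => c x ≠ 0)).exists_max_image
    (fun x => m.toSyn (m.degree (v x))) ⟨y, by simp [hys, hyc]⟩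
  rw [Finset.mem_filter] at hx
  have h := congrArg (coeff (m.degree (v x))) hsum
  rw [coeff_sum, coeff_zero, Finset.sum_eq_single_of_mem x hx.1] at h
  · rw [coeff_smul, smul_eq_mul, mul_eq_zero, m.coeff_degree_eq_zero_iff] at h
    exact h.elim hx.2 (hne x hx.1)
  · intro z hz hzx
    rw [coeff_smul, smul_eq_mul, mul_eq_zero, or_iff_not_imp_left]
    intro hcz
    refine m.coeff_eq_zero_of_lt (lt_of_le_of_ne (hmax z (by simp [hz, hcz])) fun heq => hzx ?_)
    exact hinj hz hx.1 (m.toSyn.injective heq)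

end MonomialOrder

open scoped MonomialOrder

namespace MvPolynomial

/-- The exponent vector with the given entries. -/
noncomputable abbrev exponent {n : ℕ} (v : Fin n → ℕ) : Fin n →₀ ℕ :=
  Finsupp.equivFunOnFinite.symm v

/-- The polynomial `p` is monic with leading exponent `v` for the lexicographic order. -/
def LexLeads {n : ℕ} {K : Type*} [Field K] (p : MvPolynomial (Fin n) K) (v : Fin n → ℕ) : Prop :=
  MonomialOrder.lex.Monic p ∧ MonomialOrder.lex.degree p = exponent v

namespace LexLeads

variable {n : ℕ} {K : Type*} [Field K] {p q : MvPolynomial (Fin n) K} {v w : Fin n → ℕ}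

theorem mul (hp : LexLeads p v) (hq : LexLeads q w) : LexLeads (p * q) (v + w) := by
  refine ⟨hp.1.mul hq.1, ?_⟩
  rw [MonomialOrder.degree_mul hp.1.ne_zero hq.1.ne_zero, hp.2, hq.2]
  ext; simp

theorem one : LexLeads (1 : MvPolynomial (Fin n) K) 0 := by
  refine ⟨MonomialOrder.monic_one, ?_⟩
  rw [MonomialOrder.degree_one]
  ext; simp

theorem of_list (v : Fin n → ℕ) (l : List (Fin n → ℕ))
    (hl : ∀ w ∈ l, ∃ i, (∀ j < i, w j = v j) ∧ w i < v i)
    (hp : p = monomial (exponent v) 1 + (l.map fun w => monomial (exponent w) 1).sum) :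
    LexLeads p v := by
  classical
  subst hp
  induction l with
  | nil =>
    simp [LexLeads, MonomialOrder.degree_monomial]
  | cons w l ih =>
    have ih := ih fun u hu => hl u (List.mem_cons_of_mem _ hu)
    obtain ⟨i, hi, hlt⟩ := hl w List.mem_cons_self
    have hdeg : MonomialOrder.lex.degree (monomial (exponent w) (1 : K)) ≺[MonomialOrder.lex]
        MonomialOrder.lex.degree
          (monomial (exponent v) 1 + (l.map fun w => monomial (exponent w) (1 : K)).sum) := by
      rw [ih.2, MonomialOrder.degree_monomial, if_neg one_ne_zero, MonomialOrder.lex_lt_iff]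
      exact ⟨i, hi, hlt⟩
    rw [List.map_cons, List.sum_cons, add_left_comm, add_comm]
    exact ⟨ih.1.add_of_lt hdeg, by rw [MonomialOrder.degree_add_of_lt hdeg, ih.2]⟩

end LexLeads

/-- If `f i = 0` and the products `f ^ α * g j` with `α i = 0` have distinct leading exponents,
then every relation among the `g j` over `K[f]` has coefficients divisible by `X i`. -/
theorem X_dvd_of_sum_aeval_mul_eq_zero {m n k : ℕ} {K : Type*} [Field K] (i : Fin m)
    (f : Fin m → MvPolynomial (Fin n) K) (g : Fin k → MvPolynomial (Fin n) K)
    (lf : Fin m → Fin n → ℕ) (lg : Fin k → Fin n → ℕ) (hi : f i = 0)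
    (hf : ∀ l, l ≠ i → LexLeads (f l) (lf l)) (hg : ∀ j, LexLeads (g j) (lg j))
    (hinj : ∀ (α β : Fin m →₀ ℕ) (j j' : Fin k), α i = 0 → β i = 0 →
      (∀ t, ∑ l, α l * lf l t + lg j t = ∑ l, β l * lf l t + lg j' t) → α = β ∧ j = j')
    (F : Fin k → MvPolynomial (Fin m) K) (h : ∑ j, aeval f (F j) * g j = 0) (j : Fin k) :
    X i ∣ F j := by
  classical
  set r : Fin k → MvPolynomial (Fin m) K := fun j => (F j).modMonomial (Finsupp.single i 1) with hr
  have hr0 : ∀ j, ∀ α ∈ (r j).support, α i = 0 := by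
    intro j α hα
    by_contra h0
    rw [mem_support_iff, hr, coeff_modMonomial_of_le] at hα
    · exact hα rfl
    · simpa using Nat.one_le_iff_ne_zero.2 h0
  have haeval : ∀ j, aeval f (F j) = aeval f (r j) := by
    intro j
    conv_lhs => rw [← divMonomial_add_modMonomial_single (F j) i]
    simp [hi, hr]
  have hlead : ∀ x : Σ _ : Fin k, Fin m →₀ ℕ, x.2 i = 0 →
      LexLeads ((∏ l, f l ^ x.2 l) * g x.1) (fun t => ∑ l, x.2 l * lf l t + lg x.1 t) := by
    intro x hx
    have hpow : ∀ l, LexLeads (f l ^ x.2 l) (fun t => x.2 l * lf l t) := by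
      intro l
      by_cases hl : l = i
      · subst hl
        rw [hx]
        simpa using! LexLeads.one
      · induction x.2 l with
        | zero => simpa using! LexLeads.one
        | succ e ih =>
          rw [pow_succ]
          convert ih.mul (hf l hl) using 1
          ext t; simp [Nat.succ_mul]
    have hprod : LexLeads (∏ l, f l ^ x.2 l) (fun t => ∑ l, x.2 l * lf l t) := by
      induction (Finset.univ : Finset (Fin m)) using Finset.induction_on with
      | empty => simpa using! LexLeads.one
      | insert l s hl ih =>
        rw [Finset.prod_insert hl]
        convert (hpow l).mul ih using 1
        ext t; simp [Finset.sum_insert hl]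
    exact hprod.mul (hg x.1)
  have hsum : ∑ x ∈ Finset.univ.sigma (fun j => (r j).support),
      coeff x.2 (r x.1) • ((∏ l, f l ^ x.2 l) * g x.1) = 0 := by
    rw [Finset.sum_sigma, ← h]
    refine Finset.sum_congr rfl fun j _ => ?_
    rw [haeval, aeval_def, eval₂_eq', Finset.sum_mul]
    refine Finset.sum_congr rfl fun α _ => ?_
    rw [Algebra.smul_def, mul_assoc]
  have hzero := MonomialOrder.lex.coeff_eq_zero_of_sum_smul_eq_zero
    (fun x hx => (hlead x (hr0 _ _ (Finset.mem_sigma.1 hx).2)).1.ne_zero) ?_ hsum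
  · rw [X_dvd_iff_modMonomial_eq_zero, ← support_eq_empty, Finset.eq_empty_iff_forall_notMem]
    intro α hα
    exact mem_support_iff.1 hα (hzero ⟨j, α⟩ (by simpa using hα))
  · rintro ⟨j₁, α⟩ hα ⟨j₂, β⟩ hβ heq
    simp only [Finset.coe_sigma, Set.mem_sigma_iff, Finset.mem_coe] at hα hβ
    have hα0 := hr0 _ _ hα.2
    have hβ0 := hr0 _ _ hβ.2
    simp only [(hlead ⟨j₁, α⟩ hα0).2, (hlead ⟨j₂, β⟩ hβ0).2] at heq
    obtain ⟨h1, h2⟩ := hinj α β j₁ j₂ hα0 hβ0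
      fun t => by simpa using DFunLike.congr_fun heq t
    rw [h1, h2]

end MvPolynomial

namespace SylowInvariants

/-- The primary invariants of the Sylow subgroup `sylowSubgroup`. -/
noncomputable def primary : Fin 6 → MvPolynomial (Fin 6) F2 :=
  ![X 1 + X 4,
    X 4,
    X 3 ^ 2 + X 3 * X 4,
    X 2 ^ 2 + X 2 * (X 1 + X 4),
    X 0 * X 4 + X 2 * X 3 + X 1 * X 5 + X 5 * (X 5 + X 4 + X 3),
    X 0 * (X 0 + X 2 + X 5) * (X 0 + X 1 + X 3) * (X 0 + X 1 + X 2 + X 3 + X 4 + X 5)]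

/-- The first secondary invariant of degree `3`. -/
noncomputable def cubic₁ : MvPolynomial (Fin 6) F2 :=
  X 2 * (X 3 ^ 2 + X 3 * X 4) +
    (X 1 + X 4) * (X 0 * X 4 + X 2 * X 3 + X 1 * X 5 + X 3 * X 5)

/-- The second secondary invariant of degree `3`. -/
noncomputable def cubic₂ : MvPolynomial (Fin 6) F2 :=
  X 0 ^ 2 * X 4 + X 0 * X 4 ^ 2 + X 1 ^ 2 * X 5 + X 1 * X 4 * X 5 + X 2 ^ 2 * X 3 +
    X 2 * X 3 * X 4 + X 3 ^ 2 * X 5 + X 3 * X 5 ^ 2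

/-- The secondary invariants of the Sylow subgroup `sylowSubgroup`. -/
noncomputable def secondary : Fin 4 → MvPolynomial (Fin 6) F2 :=
  ![1, cubic₁, cubic₂, cubic₁ * cubic₂]

/-- The combination of the secondary invariants with coefficients `F j` evaluated at the primary
invariants. -/
noncomputable def combination (F : Fin 4 → MvPolynomial (Fin 6) F2) : MvPolynomial (Fin 6) F2 :=
  ∑ j, aeval primary (F j) * secondary j

/-- The substitution `e = 0`, with the remaining variables ordered as `a, f, d, c, b`. -/
noncomputable def killE : MvPolynomial (Fin 6) F2 →ₐ[F2] MvPolynomial (Fin 5) F2 :=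
  aeval ![X 0, X 4, X 3, X 2, 0, X 1]

/-- The substitution `e = b`, with the remaining variables ordered as `f, a, d, c, b`. -/
noncomputable def identifyBE : MvPolynomial (Fin 6) F2 →ₐ[F2] MvPolynomial (Fin 5) F2 :=
  aeval ![X 1, X 4, X 3, X 2, X 4, X 0]

theorem monomial_exponent_five (v : Fin 5 → ℕ) :
    monomial (exponent v) (1 : F2) =
      X 0 ^ v 0 * X 1 ^ v 1 * X 2 ^ v 2 * X 3 ^ v 3 * X 4 ^ v 4 := by
  rw [monomial_eq, Finsupp.prod_fintype _ _ (by simp)]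
  simp [Fin.prod_univ_five]

theorem two_eq_zero {n : ℕ} : (2 : MvPolynomial (Fin n) F2) = 0 := CharTwo.two_eq_zero

theorem lexLeads_killE_primary : ∀ l : Fin 6, l ≠ 1 → LexLeads (killE (primary l))
    (![![0, 0, 0, 0, 1], 0, ![0, 0, 2, 0, 0], ![0, 0, 0, 2, 0], ![0, 2, 0, 0, 0],
      ![4, 0, 0, 0, 0]] l) := by
  intro l hl
  fin_cases l
  · refine .of_list _ [] (by decide) ?_
    simp [monomial_exponent_five, killE, primary]
  · exact absurd rfl hl
  · refine .of_list _ [] (by decide) ?_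
    simp [monomial_exponent_five, killE, primary]
  · refine .of_list _ [![0, 0, 0, 1, 1]] (by decide) ?_
    simp [monomial_exponent_five, killE, primary]
  · refine .of_list _ [![0, 1, 1, 0, 0], ![0, 1, 0, 0, 1], ![0, 0, 1, 1, 0]] (by decide) ?_
    simp [monomial_exponent_five, killE, primary]
    ring
  · have h₀ : LexLeads (X 0 : MvPolynomial (Fin 5) F2) ![1, 0, 0, 0, 0] :=
      .of_list _ [] (by decide) (by simp [monomial_exponent_five])
    have h₁ : LexLeads (X 0 + X 3 + X 1 : MvPolynomial (Fin 5) F2) ![1, 0, 0, 0, 0] :=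
      .of_list _ [![0, 0, 0, 1, 0], ![0, 1, 0, 0, 0]] (by decide)
        (by simp [monomial_exponent_five, add_assoc])
    have h₂ : LexLeads (X 0 + X 4 + X 2 : MvPolynomial (Fin 5) F2) ![1, 0, 0, 0, 0] :=
      .of_list _ [![0, 0, 0, 0, 1], ![0, 0, 1, 0, 0]] (by decide)
        (by simp [monomial_exponent_five, add_assoc])
    have h₃ : LexLeads (X 0 + X 4 + X 3 + X 2 + X 1 : MvPolynomial (Fin 5) F2) ![1, 0, 0, 0, 0] :=
      .of_list _ [![0, 0, 0, 0, 1], ![0, 0, 0, 1, 0], ![0, 0, 1, 0, 0], ![0, 1, 0, 0, 0]]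
        (by decide) (by simp [monomial_exponent_five, add_assoc])
    convert ((h₀.mul h₁).mul h₂).mul h₃ using 1
    · simp [killE, primary]
    · decide

theorem lexLeads_killE_secondary (j : Fin 4) : LexLeads (killE (secondary j))
    (![0, ![0, 1, 1, 0, 1], ![0, 2, 1, 0, 0], ![0, 3, 2, 0, 1]] j) := by
  have h₁ : LexLeads (killE cubic₁) ![0, 1, 1, 0, 1] := by
    refine .of_list _ [![0, 1, 0, 0, 2], ![0, 0, 2, 1, 0], ![0, 0, 1, 1, 1]] (by decide) ?_
    simp [monomial_exponent_five, killE, cubic₁]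
    ring
  have h₂ : LexLeads (killE cubic₂) ![0, 2, 1, 0, 0] := by
    refine .of_list _ [![0, 1, 0, 0, 2], ![0, 0, 1, 2, 0], ![0, 1, 2, 0, 0]] (by decide) ?_
    simp [monomial_exponent_five, killE, cubic₂]
    ring
  fin_cases j
  · simpa [secondary] using! LexLeads.one
  · exact h₁
  · exact h₂
  · convert h₁.mul h₂ using 1
    · simp [secondary]
    · decide

theorem lexLeads_identifyBE_primary : ∀ l : Fin 6, l ≠ 0 → LexLeads (identifyBE (primary l))
    (![0, ![0, 0, 0, 0, 1], ![0, 0, 2, 0, 0], ![0, 0, 0, 2, 0], ![2, 0, 0, 0, 0],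
      ![2, 2, 0, 0, 0]] l) := by
  intro l hl
  fin_cases l
  · exact absurd rfl hl
  · refine .of_list _ [] (by decide) ?_
    simp [monomial_exponent_five, identifyBE, primary]
  · refine .of_list _ [![0, 0, 1, 0, 1]] (by decide) ?_
    simp [monomial_exponent_five, identifyBE, primary]
  · refine .of_list _ [] (by decide) ?_
    simp [monomial_exponent_five, identifyBE, primary, CharTwo.add_self_eq_zero]
  · refine .of_list _ [![1, 0, 1, 0, 0], ![0, 1, 0, 0, 1], ![0, 0, 1, 1, 0]] (by decide) ?_
    simp [monomial_exponent_five, identifyBE, primary]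
    linear_combination X 4 * X 0 * two_eq_zero (n := 5)
  · have h₀ : LexLeads (X 1 : MvPolynomial (Fin 5) F2) ![0, 1, 0, 0, 0] :=
      .of_list _ [] (by decide) (by simp [monomial_exponent_five])
    have h₁ : LexLeads (X 0 + X 1 + X 3 : MvPolynomial (Fin 5) F2) ![1, 0, 0, 0, 0] :=
      .of_list _ [![0, 1, 0, 0, 0], ![0, 0, 0, 1, 0]] (by decide)
        (by simp [monomial_exponent_five, add_assoc])
    have h₂ : LexLeads (X 1 + X 2 + X 4 : MvPolynomial (Fin 5) F2) ![0, 1, 0, 0, 0] :=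
      .of_list _ [![0, 0, 1, 0, 0], ![0, 0, 0, 0, 1]] (by decide)
        (by simp [monomial_exponent_five, add_assoc])
    have h₃ : LexLeads (X 0 + X 1 + X 2 + X 3 : MvPolynomial (Fin 5) F2) ![1, 0, 0, 0, 0] :=
      .of_list _ [![0, 1, 0, 0, 0], ![0, 0, 1, 0, 0], ![0, 0, 0, 1, 0]]
        (by decide) (by simp [monomial_exponent_five, add_assoc])
    convert ((h₀.mul h₁).mul h₂).mul h₃ using 1
    · simp [identifyBE, primary]
      linear_combination X 4 * (X 1 * (X 0 + X 1 + X 3) * (X 1 + X 2 + X 4)) *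
        two_eq_zero (n := 5)
    · decide

theorem lexLeads_identifyBE_secondary (j : Fin 4) : LexLeads (identifyBE (secondary j))
    (![0, ![0, 0, 2, 1, 0], ![2, 0, 1, 0, 0], ![2, 0, 3, 1, 0]] j) := by
  have h₁ : LexLeads (identifyBE cubic₁) ![0, 0, 2, 1, 0] := by
    refine .of_list _ [![0, 0, 1, 1, 1]] (by decide) ?_
    simp [monomial_exponent_five, identifyBE, cubic₁]
    linear_combination X 4 * (X 1 * X 4 + X 3 * X 2 + X 4 * X 0 + X 2 * X 0) *
      two_eq_zero (n := 5)
  have h₂ : LexLeads (identifyBE cubic₂) ![2, 0, 1, 0, 0] := by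
    refine .of_list _ [![1, 0, 2, 0, 0], ![0, 2, 0, 0, 1], ![0, 1, 0, 0, 2], ![0, 0, 1, 2, 0],
      ![0, 0, 1, 1, 1]] (by decide) ?_
    simp [monomial_exponent_five, identifyBE, cubic₂]
    linear_combination X 4 ^ 2 * X 0 * two_eq_zero (n := 5)
  fin_cases j
  · simpa [secondary] using! LexLeads.one
  · exact h₁
  · exact h₂
  · convert h₁.mul h₂ using 1
    · simp [secondary]
    · decide

theorem map_combination {A : Type*} [CommRing A] [Algebra F2 A]
    (φ : MvPolynomial (Fin 6) F2 →ₐ[F2] A) (F : Fin 4 → MvPolynomial (Fin 6) F2) :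
    φ (combination F) = ∑ j, aeval (fun l => φ (primary l)) (F j) * φ (secondary j) := by
  simp only [combination, map_sum, map_mul, comp_aeval_apply]

theorem X_one_dvd_of_X_four_dvd_combination {F : Fin 4 → MvPolynomial (Fin 6) F2}
    (h : X 4 ∣ combination F) (j : Fin 4) : X 1 ∣ F j := by
  obtain ⟨p, hp⟩ := h
  refine X_dvd_of_sum_aeval_mul_eq_zero 1 (fun l => killE (primary l)) _ _ _
    (by simp [killE, primary]) lexLeads_killE_primary lexLeads_killE_secondary ?_ F ?_ j
  · intro α β j j' hα hβ h
    simp only [Fin.sum_univ_six, Fin.forall_fin_succ] at h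
    have key : (∀ l, α l = β l) ∧ j = j' := by
      fin_cases j <;> fin_cases j' <;> simp [Fin.forall_fin_succ] at h ⊢ <;> omega
    exact ⟨Finsupp.ext key.1, key.2⟩
  · rw [← map_combination, hp, map_mul]
    simp [killE]

theorem X_zero_dvd_of_dvd_combination {F : Fin 4 → MvPolynomial (Fin 6) F2}
    (h : X 1 + X 4 ∣ combination F) (j : Fin 4) : X 0 ∣ F j := by
  obtain ⟨p, hp⟩ := h
  refine X_dvd_of_sum_aeval_mul_eq_zero 0 (fun l => identifyBE (primary l)) _ _ _
    (by simp [identifyBE, primary, CharTwo.add_self_eq_zero]) lexLeads_identifyBE_primary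
    lexLeads_identifyBE_secondary ?_ F ?_ j
  · intro α β j j' hα hβ h
    simp only [Fin.sum_univ_six, Fin.forall_fin_succ] at h
    have key : (∀ l, α l = β l) ∧ j = j' := by
      fin_cases j <;> fin_cases j' <;> simp [Fin.forall_fin_succ] at h ⊢ <;> omega
    exact ⟨Finsupp.ext key.1, key.2⟩
  · rw [← map_combination, hp, map_mul]
    simp [identifyBE, CharTwo.add_self_eq_zero]

theorem combination_X_mul (i : Fin 6) (F : Fin 4 → MvPolynomial (Fin 6) F2) :
    combination (fun j => X i * F j) = primary i * combination F := by
  simp only [combination, map_mul, aeval_X, Finset.mul_sum, mul_assoc]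

theorem primary_one : primary 1 = X 4 := rfl

theorem primary_zero_ne_zero : primary 0 ≠ 0 := by
  intro h
  have := congrArg (eval (Pi.single 1 1)) h
  simp [primary] at this

theorem mem_range_of_primary_zero_mul {p : MvPolynomial (Fin 6) F2}
    (h : primary 0 * p ∈ Set.range combination) : p ∈ Set.range combination := by
  obtain ⟨F, hF⟩ := h
  choose F' hF' using X_zero_dvd_of_dvd_combination (F := F) ⟨p, hF⟩
  refine ⟨F', mul_left_cancel₀ primary_zero_ne_zero ?_⟩
  rw [← hF, ← combination_X_mul, funext hF']

theorem mem_range_of_primary_one_mul {p : MvPolynomial (Fin 6) F2}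
    (h : primary 1 * p ∈ Set.range combination) : p ∈ Set.range combination := by
  obtain ⟨F, hF⟩ := h
  choose F' hF' using X_one_dvd_of_X_four_dvd_combination (F := F) ⟨p, hF⟩
  refine ⟨F', mul_left_cancel₀ (X_ne_zero 4) ?_⟩
  rw [← primary_one, ← hF, ← combination_X_mul, funext hF']

theorem eq_zero_of_combination_eq_zero {F : Fin 4 → MvPolynomial (Fin 6) F2}
    (h : combination F = 0) : F = 0 := by
  have hpow : ∀ n : ℕ, ∀ F : Fin 4 → MvPolynomial (Fin 6) F2, combination F = 0 →
      ∀ j, X 0 ^ n ∣ F j := by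
    intro n
    induction n with
    | zero => simp
    | succ n ih =>
      intro F hF j
      choose F' hF' using X_zero_dvd_of_dvd_combination (F := F) (hF ▸ dvd_zero _)
      have h0 : combination F' = 0 := by
        refine mul_left_cancel₀ primary_zero_ne_zero ?_
        rw [← combination_X_mul, mul_zero, ← hF, funext hF']
      rw [hF', pow_succ']
      exact mul_dvd_mul_left _ (ih F' h0 j)
  funext j
  by_contra hj
  have hfin : FiniteMultiplicity (X 0) (F j) :=
    FiniteMultiplicity.of_not_isUnit (X_prime (i := 0)).not_isUnit hj
  obtain ⟨n, hn⟩ := hfin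
  exact hn (hpow _ F h j)

theorem cubic₁_sq : cubic₁ ^ 2 =
    primary 0 ^ 4 * primary 4 + primary 0 ^ 2 * primary 2 * primary 4 + primary 2 ^ 2 * primary 3 +
      primary 0 ^ 2 * primary 2 * primary 3 + primary 0 ^ 2 * primary 1 ^ 2 * primary 4 +
      (primary 0 ^ 3 + primary 0 * primary 2) * cubic₁ + primary 0 ^ 2 * primary 1 * cubic₂ := by
  simp only [primary, cubic₁, cubic₂]
  simp
  have := two_eq_zero (n := 6)
  grind

theorem cubic₂_sq : cubic₂ ^ 2 =
    cubic₁ ^ 2 + primary 2 * primary 3 ^ 2 + primary 2 * primary 4 ^ 2 +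
      primary 1 ^ 2 * primary 5 +
      (primary 1 * primary 4 + primary 1 * primary 3) * (cubic₁ + cubic₂) := by
  simp only [primary, cubic₁, cubic₂]
  simp
  have := two_eq_zero (n := 6)
  grind

theorem cubic₁_mul_mem_range {p : MvPolynomial (Fin 6) F2} (h : p ∈ Set.range combination) :
    cubic₁ * p ∈ Set.range combination := by
  obtain ⟨F, rfl⟩ := h
  let u : MvPolynomial (Fin 6) F2 :=
    X 0 ^ 4 * X 4 + X 0 ^ 2 * X 2 * X 4 + X 2 ^ 2 * X 3 + X 0 ^ 2 * X 2 * X 3 +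
      X 0 ^ 2 * X 1 ^ 2 * X 4
  let v : MvPolynomial (Fin 6) F2 := X 0 ^ 3 + X 0 * X 2
  let w : MvPolynomial (Fin 6) F2 := X 0 ^ 2 * X 1
  let u' : MvPolynomial (Fin 6) F2 := X 2 * X 3 ^ 2 + X 2 * X 4 ^ 2 + X 1 ^ 2 * X 5
  let v' : MvPolynomial (Fin 6) F2 := X 1 * X 4 + X 1 * X 3
  refine ⟨![F 1 * u + F 3 * w * (u + u'), F 0 + F 1 * v + F 3 * w * (v + v'),
    F 1 * w + F 3 * u + F 3 * w * (w + v'), F 2 + F 3 * v], ?_⟩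
  simp only [combination, Fin.sum_univ_four, secondary, u, v, w, u', v', Matrix.cons_val, map_add,
    map_mul, map_pow, aeval_X]
  linear_combination
    -(aeval primary (F 1) + aeval primary (F 3) * cubic₂ +
        aeval primary (F 3) * (primary 0 ^ 2 * primary 1)) * cubic₁_sq -
      aeval primary (F 3) * (primary 0 ^ 2 * primary 1) * cubic₂_sq

theorem primary_mul_mem_range (i : Fin 6) {p : MvPolynomial (Fin 6) F2}
    (h : p ∈ Set.range combination) : primary i * p ∈ Set.range combination := by
  obtain ⟨F, rfl⟩ := h
  exact ⟨_, combination_X_mul i F⟩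

theorem adjoin_subset_range_combination {s : Set (MvPolynomial (Fin 6) F2)}
    (hs : ∀ x ∈ s, ∀ p ∈ Set.range combination, x * p ∈ Set.range combination)
    {x : MvPolynomial (Fin 6) F2} (hx : x ∈ Algebra.adjoin F2 s) : x ∈ Set.range combination := by
  have hadd : ∀ p ∈ Set.range combination, ∀ q ∈ Set.range combination,
      p + q ∈ Set.range combination := by
    rintro _ ⟨F, rfl⟩ _ ⟨G, rfl⟩
    exact ⟨F + G, by simp [combination, add_mul, Finset.sum_add_distrib]⟩
  have hmul : ∀ p ∈ Set.range combination, x * p ∈ Set.range combination := by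
    induction hx using Algebra.adjoin_induction with
    | mem x hx => exact hs x hx
    | algebraMap r =>
      rintro _ ⟨F, rfl⟩
      refine ⟨fun j => C r * F j, ?_⟩
      simp [combination, Finset.mul_sum, mul_assoc]
    | add x y _ _ hx hy =>
      intro p hp
      rw [add_mul]
      exact hadd _ (hx p hp) _ (hy p hp)
    | mul x y _ _ hx hy =>
      intro p hp
      rw [mul_assoc]
      exact hx _ (hy p hp)
  have hone : (1 : MvPolynomial (Fin 6) F2) ∈ Set.range combination :=
    ⟨![1, 0, 0, 0], by simp [combination, Fin.sum_univ_four, secondary]⟩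
  simpa using hmul 1 hone

end SylowInvariants

namespace Subalgebra

variable {K A : Type*} [CommRing K] [CommRing A] [Algebra K A]

/-- If `u` is quadratic over `B` and the generators lie in `B + B u`, so does the algebra they
generate. -/
theorem exists_add_mul_of_mem_adjoin (B : Subalgebra K A) {u k l : A} (hk : k ∈ B) (hl : l ∈ B)
    (hu : u ^ 2 = k * u + l) {s : Set A} (hs : ∀ x ∈ s, x ∈ B ∨ x = u) {x : A}
    (hx : x ∈ Algebra.adjoin K s) : ∃ α ∈ B, ∃ β ∈ B, x = α + β * u := by
  induction hx using Algebra.adjoin_induction with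
  | mem x hx =>
    rcases hs x hx with h | rfl
    · exact ⟨x, h, 0, B.zero_mem, by ring⟩
    · exact ⟨0, B.zero_mem, 1, B.one_mem, by ring⟩
  | algebraMap r => exact ⟨_, B.algebraMap_mem r, 0, B.zero_mem, by ring⟩
  | add x y _ _ hx hy =>
    obtain ⟨α, hα, β, hβ, rfl⟩ := hx
    obtain ⟨γ, hγ, δ, hδ, rfl⟩ := hy
    exact ⟨_, B.add_mem hα hγ, _, B.add_mem hβ hδ, by ring⟩
  | mul x y _ _ hx hy =>
    obtain ⟨α, hα, β, hβ, rfl⟩ := hx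
    obtain ⟨γ, hγ, δ, hδ, rfl⟩ := hy
    refine ⟨α * γ + β * δ * l, B.add_mem (B.mul_mem hα hγ) (B.mul_mem (B.mul_mem hβ hδ) hl),
      α * δ + β * γ + β * δ * k, B.add_mem (B.add_mem (B.mul_mem hα hδ) (B.mul_mem hβ hγ))
        (B.mul_mem (B.mul_mem hβ hδ) hk), ?_⟩
    linear_combination β * δ * hu

/-- An endomorphism that fixes `B = K[s]` and moves the quadratic element `u` has no further fixed
points in `B + B u`. -/
theorem mem_adjoin_of_fixed [IsDomain A] {s t : Set A} {u k l : A}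
    (hk : k ∈ Algebra.adjoin K s) (hl : l ∈ Algebra.adjoin K s) (hu : u ^ 2 = k * u + l)
    (ht : ∀ x ∈ t, x ∈ Algebra.adjoin K s ∨ x = u) (φ : A →ₐ[K] A) (hφ : ∀ x ∈ s, φ x = x)
    (hφu : φ u ≠ u) {x : A} (hx : x ∈ Algebra.adjoin K t) (hfix : φ x = x) :
    x ∈ Algebra.adjoin K s := by
  obtain ⟨α, hα, β, hβ, rfl⟩ := exists_add_mul_of_mem_adjoin _ hk hl hu ht hx
  have hfixs : ∀ y ∈ Algebra.adjoin K s, φ y = y := fun y hy =>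
    Algebra.adjoin_le (S := AlgHom.equalizer φ (AlgHom.id K A)) hφ hy
  rw [map_add, map_mul, hfixs α hα, hfixs β hβ, add_right_inj] at hfix
  have hβ0 : β = 0 := by
    have : β * (φ u - u) = 0 := by linear_combination hfix
    exact (mul_eq_zero.1 this).resolve_right (sub_ne_zero.2 hφu)
  simpa [hβ0] using hα

/-- If `h ∈ B` and all generators but `u` lie in `B`, and `h * u ∈ B`, then every element of the
algebra they generate is multiplied into `B` by a power of `h`. -/
theorem exists_pow_mul_mem_of_mem_adjoin (B : Subalgebra K A) {h u : A} (hh : h ∈ B)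
    (hu : h * u ∈ B) {s : Set A} (hs : ∀ x ∈ s, x ∈ B ∨ x = u) {x : A}
    (hx : x ∈ Algebra.adjoin K s) : ∃ n : ℕ, h ^ n * x ∈ B := by
  induction hx using Algebra.adjoin_induction with
  | mem x hx =>
    rcases hs x hx with hB | rfl
    · exact ⟨0, by simpa⟩
    · exact ⟨1, by simpa⟩
  | algebraMap r => exact ⟨0, by simp⟩
  | add x y _ _ hx hy =>
    obtain ⟨m, hm⟩ := hx
    obtain ⟨n, hn⟩ := hy
    refine ⟨m + n, ?_⟩
    convert B.add_mem (B.mul_mem (B.pow_mem hh n) hm) (B.mul_mem (B.pow_mem hh m) hn) using 1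
    ring
  | mul x y _ _ hx hy =>
    obtain ⟨m, hm⟩ := hx
    obtain ⟨n, hn⟩ := hy
    refine ⟨m + n, ?_⟩
    convert B.mul_mem hm hn using 1
    ring

end Subalgebra

namespace SylowInvariants

/-- The action of the transvection `A` on the polynomial ring. -/
noncomputable def actA : MvPolynomial (Fin 6) F2 →ₐ[F2] MvPolynomial (Fin 6) F2 :=
  aeval ![X 0 + X 2 + X 5, X 1, X 2, X 3 + X 4, X 4, X 5]

/-- The action of the transvection `B⁻¹ A B` on the polynomial ring. -/
noncomputable def actT : MvPolynomial (Fin 6) F2 →ₐ[F2] MvPolynomial (Fin 6) F2 :=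
  aeval ![X 0, X 1, X 1 + X 2 + X 4, X 3, X 4, X 3 + X 5]

/-- The action of the commutator of `A` and `B⁻¹ A B` on the polynomial ring. -/
noncomputable def actZ : MvPolynomial (Fin 6) F2 →ₐ[F2] MvPolynomial (Fin 6) F2 :=
  aeval ![X 0 + X 1 + X 3, X 1, X 2, X 3, X 4, X 4 + X 5]

theorem actA_primary (i : Fin 6) : actA (primary i) = primary i := by
  have := two_eq_zero (n := 6)
  fin_cases i <;> simp [primary, actA] <;> grind

theorem actT_primary (i : Fin 6) : actT (primary i) = primary i := by
  have := two_eq_zero (n := 6)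
  fin_cases i <;> simp [primary, actT] <;> grind

theorem actZ_primary (i : Fin 6) : actZ (primary i) = primary i := by
  have := two_eq_zero (n := 6)
  fin_cases i <;> simp [primary, actZ] <;> grind

theorem actA_cubic₁ : actA cubic₁ = cubic₁ := by
  have := two_eq_zero (n := 6)
  simp [cubic₁, actA]
  grind

theorem actT_cubic₁ : actT cubic₁ = cubic₁ := by
  have := two_eq_zero (n := 6)
  simp [cubic₁, actT]
  grind

theorem actZ_cubic₁ : actZ cubic₁ = cubic₁ := by
  have := two_eq_zero (n := 6)
  simp [cubic₁, actZ]
  grind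

theorem actA_cubic₂ : actA cubic₂ = cubic₂ := by
  have := two_eq_zero (n := 6)
  simp [cubic₂, actA]
  grind

theorem actT_cubic₂ : actT cubic₂ = cubic₂ := by
  have := two_eq_zero (n := 6)
  simp [cubic₂, actT]
  grind

theorem actZ_cubic₂ : actZ cubic₂ = cubic₂ := by
  have := two_eq_zero (n := 6)
  simp [cubic₂, actZ]
  grind

theorem mem_range_combination_of_fixed {p : MvPolynomial (Fin 6) F2} (hA : actA p = p)
    (hT : actT p = p) (hZ : actZ p = p) : p ∈ Set.range combination := by
  have h2 := two_eq_zero (n := 6)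
  let w : MvPolynomial (Fin 6) F2 := X 5 ^ 2 + X 4 * X 5
  let s₀ : Set (MvPolynomial (Fin 6) F2) := {primary 0, primary 1, primary 4, X 2, X 3, X 5}
  let s₁ : Set (MvPolynomial (Fin 6) F2) := {primary 0, primary 1, primary 4, X 2, X 3, w}
  let s₂ : Set (MvPolynomial (Fin 6) F2) := {primary 0, primary 1, primary 4, X 2, primary 2, w}
  let s₃ : Set (MvPolynomial (Fin 6) F2) :=
    {primary 0, primary 1, primary 4, X 2, primary 2, cubic₁}
  let s₄ : Set (MvPolynomial (Fin 6) F2) :=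
    {primary 0, primary 1, primary 4, primary 3, primary 2, cubic₁}
  have sub {s : Set (MvPolynomial (Fin 6) F2)} {x} (h : x ∈ s) : x ∈ Algebra.adjoin F2 s :=
    Algebra.subset_adjoin h
  have hloc₀ : ∃ n : ℕ, primary 1 ^ n * p ∈ Algebra.adjoin F2 s₀ := by
    have hX1 : X 1 ∈ Algebra.adjoin F2 s₀ := by
      have : (X 1 : MvPolynomial (Fin 6) F2) = primary 0 - primary 1 := by simp [primary]
      rw [this]
      exact sub_mem (sub (by simp [s₀])) (sub (by simp [s₀]))
    have hX4 : X 4 ∈ Algebra.adjoin F2 s₀ := sub (x := primary 1) (by simp [s₀])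
    have hX2 : X 2 ∈ Algebra.adjoin F2 s₀ := sub (by simp [s₀])
    have hX3 : X 3 ∈ Algebra.adjoin F2 s₀ := sub (by simp [s₀])
    have hX5 : X 5 ∈ Algebra.adjoin F2 s₀ := sub (by simp [s₀])
    refine Subalgebra.exists_pow_mul_mem_of_mem_adjoin (s := Set.range X) (u := X 0) _ hX4 ?_ ?_
      (by rw [adjoin_range_X]; trivial)
    · have : X 4 * X 0 =
          primary 4 - (X 2 * X 3 + X 1 * X 5 + X 5 * (X 5 + X 4 + X 3)) := by
        simp [primary]; ring
      rw [this]
      exact sub_mem (sub (by simp [s₀])) (add_mem (add_mem (mul_mem hX2 hX3) (mul_mem hX1 hX5))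
        (mul_mem hX5 (add_mem (add_mem hX5 hX4) hX3)))
    · rintro _ ⟨i, rfl⟩
      fin_cases i
      exacts [.inr rfl, .inl hX1, .inl hX2, .inl hX3, .inl hX4, .inl hX5]
  obtain ⟨m, hm⟩ := hloc₀
  have hm₁ : primary 1 ^ m * p ∈ Algebra.adjoin F2 s₁ := by
    refine Subalgebra.mem_adjoin_of_fixed (u := X 5) (k := primary 1) (l := w)
      (sub (by simp [s₁])) (sub (by simp [s₁])) ?_ ?_ actZ ?_ ?_ hm ?_
    · simp only [primary_one, w]; grind
    · rintro x (rfl | rfl | rfl | rfl | rfl | rfl)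
      exacts [.inl (sub (by simp [s₁])), .inl (sub (by simp [s₁])), .inl (sub (by simp [s₁])),
        .inl (sub (by simp [s₁])), .inl (sub (by simp [s₁])), .inr rfl]
    · rintro x (rfl | rfl | rfl | rfl | rfl | rfl)
      exacts [actZ_primary 0, actZ_primary 1, actZ_primary 4, by simp [actZ], by simp [actZ],
        by simp [actZ, w]; grind]
    · simp [actZ]
    · rw [map_mul, map_pow, actZ_primary, hZ]
  have hm₂ : primary 1 ^ m * p ∈ Algebra.adjoin F2 s₂ := by
    refine Subalgebra.mem_adjoin_of_fixed (u := X 3) (k := primary 1) (l := primary 2)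
      (sub (by simp [s₂])) (sub (by simp [s₂])) ?_ ?_ actA ?_ ?_ hm₁ ?_
    · simp [primary]; grind
    · rintro x (rfl | rfl | rfl | rfl | rfl | rfl)
      exacts [.inl (sub (by simp [s₂])), .inl (sub (by simp [s₂])), .inl (sub (by simp [s₂])),
        .inl (sub (by simp [s₂])), .inr rfl, .inl (sub (by simp [s₂]))]
    · rintro x (rfl | rfl | rfl | rfl | rfl | rfl)
      exacts [actA_primary 0, actA_primary 1, actA_primary 4, by simp [actA], actA_primary 2,
        by simp [actA, w]]
    · simp [actA]
    · rw [map_mul, map_pow, actA_primary, hA]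
  have hloc₃ : ∃ n : ℕ, primary 0 ^ n * (primary 1 ^ m * p) ∈ Algebra.adjoin F2 s₃ := by
    refine Subalgebra.exists_pow_mul_mem_of_mem_adjoin (u := w) _ (sub (by simp [s₃])) ?_ ?_ hm₂
    · have : primary 0 * w = cubic₁ + primary 0 * primary 4 + X 2 * primary 2 := by
        simp [primary, cubic₁, w]; grind
      rw [this]
      exact add_mem (add_mem (sub (by simp [s₃])) (mul_mem (sub (by simp [s₃]))
        (sub (by simp [s₃])))) (mul_mem (sub (by simp [s₃])) (sub (by simp [s₃])))
    · rintro x (rfl | rfl | rfl | rfl | rfl | rfl)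
      exacts [.inl (sub (by simp [s₃])), .inl (sub (by simp [s₃])), .inl (sub (by simp [s₃])),
        .inl (sub (by simp [s₃])), .inl (sub (by simp [s₃])), .inr rfl]
  obtain ⟨n, hn⟩ := hloc₃
  have hn₄ : primary 0 ^ n * (primary 1 ^ m * p) ∈ Algebra.adjoin F2 s₄ := by
    refine Subalgebra.mem_adjoin_of_fixed (u := X 2) (k := primary 0) (l := primary 3)
      (sub (by simp [s₄])) (sub (by simp [s₄])) ?_ ?_ actT ?_ ?_ hn ?_
    · simp [primary]; grind
    · rintro x (rfl | rfl | rfl | rfl | rfl | rfl)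
      exacts [.inl (sub (by simp [s₄])), .inl (sub (by simp [s₄])), .inl (sub (by simp [s₄])),
        .inr rfl, .inl (sub (by simp [s₄])), .inl (sub (by simp [s₄]))]
    · rintro x (rfl | rfl | rfl | rfl | rfl | rfl)
      exacts [actT_primary 0, actT_primary 1, actT_primary 4, actT_primary 3, actT_primary 2,
        actT_cubic₁]
    · intro h
      have := congrArg (eval (Pi.single 1 1)) h
      simp [actT] at this
    · rw [map_mul, map_mul, map_pow, map_pow, actT_primary, actT_primary, hT]
  have hmem : primary 0 ^ n * (primary 1 ^ m * p) ∈ Set.range combination := by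
    refine adjoin_subset_range_combination ?_ hn₄
    rintro x (rfl | rfl | rfl | rfl | rfl | rfl) q hq
    exacts [primary_mul_mem_range 0 hq, primary_mul_mem_range 1 hq, primary_mul_mem_range 4 hq,
      primary_mul_mem_range 3 hq, primary_mul_mem_range 2 hq, cubic₁_mul_mem_range hq]
  have cancel : ∀ (i : Fin 6), (∀ q, primary i * q ∈ Set.range combination →
      q ∈ Set.range combination) → ∀ (k : ℕ) (q), primary i ^ k * q ∈ Set.range combination →
      q ∈ Set.range combination := by
    intro i hi k
    induction k with
    | zero => simp
    | succ k ih =>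
      intro q hq
      rw [pow_succ, mul_assoc] at hq
      exact hi q (ih _ hq)
  exact cancel 1 (fun _ => mem_range_of_primary_one_mul) m p
    (cancel 0 (fun _ => mem_range_of_primary_zero_mul) n _ hmem)

theorem isHomogeneous_primary (i : Fin 6) :
    (primary i).IsHomogeneous (![1, 1, 2, 2, 2, 4] i) := by
  have hX (i : Fin 6) : (X i : MvPolynomial (Fin 6) F2).IsHomogeneous 1 := isHomogeneous_X _ _
  fin_cases i
  · exact (hX 1).add (hX 4)
  · exact hX 4
  · exact ((hX 3).pow 2).add ((hX 3).mul (hX 4))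
  · exact ((hX 2).pow 2).add ((hX 2).mul ((hX 1).add (hX 4)))
  · exact ((((hX 0).mul (hX 4)).add ((hX 2).mul (hX 3))).add ((hX 1).mul (hX 5))).add
      ((hX 5).mul (((hX 5).add (hX 4)).add (hX 3)))
  · exact (((hX 0).mul (((hX 0).add (hX 2)).add (hX 5))).mul (((hX 0).add (hX 1)).add (hX 3))).mul
      ((((((hX 0).add (hX 1)).add (hX 2)).add (hX 3)).add (hX 4)).add (hX 5))

theorem isHomogeneous_secondary (j : Fin 4) :
    (secondary j).IsHomogeneous (![0, 3, 3, 6] j) := by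
  have hX (i : Fin 6) : (X i : MvPolynomial (Fin 6) F2).IsHomogeneous 1 := isHomogeneous_X _ _
  have h₁ : cubic₁.IsHomogeneous 3 :=
    ((hX 2).mul (((hX 3).pow 2).add ((hX 3).mul (hX 4)))).add
      (((hX 1).add (hX 4)).mul (((((hX 0).mul (hX 4)).add ((hX 2).mul (hX 3))).add
        ((hX 1).mul (hX 5))).add ((hX 3).mul (hX 5))))
  have h₂ : cubic₂.IsHomogeneous 3 :=
    ((((((((((hX 0).pow 2).mul (hX 4)).add ((hX 0).mul ((hX 4).pow 2))).add
      (((hX 1).pow 2).mul (hX 5))).add (((hX 1).mul (hX 4)).mul (hX 5))).add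
      (((hX 2).pow 2).mul (hX 3))).add (((hX 2).mul (hX 3)).mul (hX 4))).add
      (((hX 3).pow 2).mul (hX 5))).add ((hX 3).mul ((hX 5).pow 2)))
  fin_cases j
  · exact isHomogeneous_one _ _
  · exact h₁
  · exact h₂
  · exact h₁.mul h₂

end SylowInvariants

/-- A free module over `K[f]` on `g`, from unique expressibility by polynomials in `f`. -/
theorem exists_basis_of_aeval {K R : Type*} [CommRing K] [CommRing R] [Algebra K R] {m n : ℕ}
    (f : Fin m → R) (g : Fin n → R) (k : Fin n)
    (hinj : ∀ F : Fin n → MvPolynomial (Fin m) K, ∑ j, aeval f (F j) * g j = 0 → F = 0)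
    (hsurj : ∀ p, ∃ F : Fin n → MvPolynomial (Fin m) K, ∑ j, aeval f (F j) * g j = p) :
    AlgebraicIndependent K f ∧
      ∃ b : Module.Basis (Fin n) (Algebra.adjoin K (Set.range f)) R, ∀ j, b j = g j := by
  classical
  have hadj : Algebra.adjoin K (Set.range f) = (aeval f : MvPolynomial (Fin m) K →ₐ[K] R).range :=
    Algebra.adjoin_range_eq_range_aeval K f
  refine ⟨?_, ?_⟩
  · rw [algebraicIndependent_iff]
    intro p hp
    have := hinj (Pi.single k p) (by
      rw [Finset.sum_eq_single k] <;> simp +contextual [hp, Pi.single_eq_of_ne])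
    simpa using congrFun this k
  · have hli : LinearIndependent (Algebra.adjoin K (Set.range f)) g := by
      rw [Fintype.linearIndependent_iff]
      intro c hc j
      have hc' : ∀ j, ∃ F : MvPolynomial (Fin m) K, aeval f F = (c j : R) := fun j =>
        hadj.le (c j).2
      choose F hF using hc'
      have h0 := hinj F (by simpa [hF, Algebra.smul_def] using! hc)
      apply Subtype.ext
      rw [← hF, h0]
      simp
    have hspan : ⊤ ≤ Submodule.span (Algebra.adjoin K (Set.range f)) (Set.range g) := by
      intro p _
      obtain ⟨F, rfl⟩ := hsurj p
      refine Submodule.sum_mem _ fun j _ => ?_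
      have hmem : aeval f (F j) ∈ Algebra.adjoin K (Set.range f) := hadj ▸ ⟨F j, rfl⟩
      exact Submodule.smul_mem _ (⟨_, hmem⟩ : Algebra.adjoin K (Set.range f))
        (Submodule.subset_span ⟨j, rfl⟩)
    exact ⟨Module.Basis.mk hli hspan, fun j => Module.Basis.mk_apply hli hspan j⟩

namespace SylowInvariants

/-- The elements of a Sylow `2`-subgroup of `GL₃(𝔽₂)` containing the generator `A`. -/
def unipotent (x y z : F2) : G3 :=
  ⟨!![1, x, y; 0, 1, 0; 0, z, 1], !![1, x + y * z, y; 0, 1, 0; 0, z, 1],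
    by revert x y z; decide, by revert x y z; decide⟩

theorem unipotent_mul (x y z x' y' z' : F2) :
    unipotent x y z * unipotent x' y' z' = unipotent (x + x' + y * z') (y + y') (z + z') := by
  apply Units.ext
  ext i j
  fin_cases i <;> fin_cases j <;>
    simp [unipotent, Matrix.mul_apply, Fin.sum_univ_three] <;> ring

theorem unipotent_zero : unipotent 0 0 0 = 1 := by
  apply Units.ext
  ext i j
  fin_cases i <;> fin_cases j <;> rfl

/-- The Sylow `2`-subgroup of `GL₃(𝔽₂)` that stabilises the flag `⟨e₂⟩ ⊂ ⟨e₂, e₃⟩`. -/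
def sylowSubgroup : Subgroup G3 where
  carrier := Set.range fun t : F2 × F2 × F2 => unipotent t.1 t.2.1 t.2.2
  mul_mem' := by
    rintro _ _ ⟨s, rfl⟩ ⟨t, rfl⟩
    exact ⟨(s.1 + t.1 + s.2.1 * t.2.2, s.2.1 + t.2.1, s.2.2 + t.2.2),
      (unipotent_mul _ _ _ _ _ _).symm⟩
  one_mem' := ⟨0, unipotent_zero⟩
  inv_mem' := by
    rintro _ ⟨t, rfl⟩
    refine ⟨(t.1 + t.2.1 * t.2.2, t.2.1, t.2.2), ?_⟩
    rw [eq_comm, inv_eq_iff_mul_eq_one, unipotent_mul, ← unipotent_zero]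
    congr 1 <;> grind

theorem card_sylowSubgroup : Nat.card sylowSubgroup = 8 := by
  have hinj : Function.Injective fun t : F2 × F2 × F2 => unipotent t.1 t.2.1 t.2.2 := by
    rintro ⟨x, y, z⟩ ⟨x', y', z'⟩ h
    have hM (i j : Fin 3) : (unipotent x y z : Matrix (Fin 3) (Fin 3) F2) i j =
        (unipotent x' y' z' : Matrix (Fin 3) (Fin 3) F2) i j := by
      rw [show unipotent x y z = unipotent x' y' z' from h]
    have h₁ : x = x' := hM 0 1
    have h₂ : y = y' := hM 0 2
    have h₃ : z = z' := hM 2 1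
    rw [h₁, h₂, h₃]
  have h := Nat.card_congr (Equiv.ofInjective _ hinj)
  rw [Nat.card_eq_fintype_card] at h
  exact h.symm.trans (by decide)

theorem card_G3 : Nat.card G3 = 168 := by
  rw [Matrix.card_GL_field]
  simp [Fin.prod_univ_three, ZMod.card]

theorem card_sylow (P : Sylow 2 G3) : Nat.card (P : Subgroup G3) = 8 := by
  have h : Nat.factorization 168 2 = 3 := by
    rw [show 168 = 2 ^ 3 * 21 by norm_num, Nat.factorization_def _ Nat.prime_two]
    rw [padicValNat.mul (by norm_num) (by norm_num), padicValNat.prime_pow,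
      padicValNat.eq_zero_of_not_dvd (by norm_num)]
  rw [P.card_eq_multiplicity, card_G3, h]
  norm_num

theorem exists_conj_sylowSubgroup (P : Sylow 2 G3) :
    ∃ γ : G3, ∀ σ, σ ∈ (P : Subgroup G3) ↔ γ⁻¹ * σ * γ ∈ sylowSubgroup := by
  have hcard : Nat.card sylowSubgroup = 2 ^ (Nat.card G3).factorization 2 := by
    rw [card_sylowSubgroup, ← P.card_eq_multiplicity, card_sylow]
  obtain ⟨γ, hγ⟩ := MulAction.exists_smul_eq G3 (Sylow.ofCard sylowSubgroup hcard) P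
  refine ⟨γ, fun σ => ?_⟩
  rw [← hγ, Sylow.coe_subgroup_smul]
  rw [Subgroup.mem_pointwise_smul_iff_inv_smul_mem]
  simp [← map_inv, MulAut.smul_def]

variable {D : G3 →* GL (Fin 6) F2}

theorem polyAct_mul_apply (D : G3 →* GL (Fin 6) F2) (σ τ : G3) (p : MvPolynomial (Fin 6) F2) :
    polyAct D (σ * τ) p = polyAct D τ (polyAct D σ p) := by
  rw [← AlgHom.comp_apply]
  congr 1
  refine algHom_ext fun i => ?_
  simp only [polyAct, map_mul, Units.val_mul, Matrix.mul_apply, aeval_X, AlgHom.comp_apply, map_sum,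
    map_smul, Finset.sum_smul, Finset.smul_sum, mul_smul]
  exact Finset.sum_comm

theorem polyAct_one_apply (D : G3 →* GL (Fin 6) F2) (p : MvPolynomial (Fin 6) F2) :
    polyAct D 1 p = p := by
  have : polyAct D 1 = AlgHom.id F2 _ := by
    refine algHom_ext fun i => ?_
    simp [polyAct, Matrix.one_apply, ite_smul]
  rw [this, AlgHom.id_apply]

theorem polyAct_inv_apply (D : G3 →* GL (Fin 6) F2) (σ : G3) (p : MvPolynomial (Fin 6) F2) :
    polyAct D σ⁻¹ (polyAct D σ p) = p := by
  rw [← polyAct_mul_apply, mul_inv_cancel, polyAct_one_apply]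

theorem isHomogeneous_polyAct (D : G3 →* GL (Fin 6) F2) (σ : G3) {p : MvPolynomial (Fin 6) F2}
    {n : ℕ} (hp : p.IsHomogeneous n) : (polyAct D σ p).IsHomogeneous n := by
  have := hp.aeval (n := 1) (fun i => ∑ j, (D σ : Matrix (Fin 6) (Fin 6) F2) i j • X j) fun i =>
    IsHomogeneous.sum _ _ _ fun j _ => by
      rw [smul_eq_C_mul]
      exact (isHomogeneous_X _ _).C_mul _
  rwa [one_mul] at this

theorem polyAct_unipotent_A (hA : (D Agen : Matrix (Fin 6) (Fin 6) F2) = DA6) :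
    polyAct D (unipotent 0 1 0) = actA := by
  have hu : unipotent 0 1 0 = Agen := by
    apply Units.ext
    ext i j
    fin_cases i <;> fin_cases j <;> rfl
  refine algHom_ext fun i => ?_
  fin_cases i <;> simp [polyAct, actA, hu, hA, DA6, Fin.sum_univ_six]

theorem polyAct_unipotent_T (hA : (D Agen : Matrix (Fin 6) (Fin 6) F2) = DA6)
    (hB : (D Bgen : Matrix (Fin 6) (Fin 6) F2) = DB6) :
    polyAct D (unipotent 0 0 1) = actT := by
  have hu : unipotent 0 0 1 = Bgen * Bgen * Agen * Bgen := by
    apply Units.ext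
    simp only [Units.val_mul, unipotent, Bgen, Agen]
    decide
  have hD : (D (unipotent 0 0 1) : Matrix (Fin 6) (Fin 6) F2) =
      !![1, 0, 0, 0, 0, 0; 0, 1, 0, 0, 0, 0; 0, 1, 1, 0, 1, 0; 0, 0, 0, 1, 0, 0; 0, 0, 0, 0, 1, 0;
        0, 0, 0, 1, 0, 1] := by
    rw [hu]
    simp only [map_mul, Units.val_mul, hA, hB]
    decide
  refine algHom_ext fun i => ?_
  fin_cases i <;> simp [polyAct, actT, hD, Fin.sum_univ_six]

theorem polyAct_unipotent_Z (hA : (D Agen : Matrix (Fin 6) (Fin 6) F2) = DA6)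
    (hB : (D Bgen : Matrix (Fin 6) (Fin 6) F2) = DB6) :
    polyAct D (unipotent 1 0 0) = actZ := by
  have hu : unipotent 1 0 0 =
      unipotent 0 1 0 * unipotent 0 0 1 * (unipotent 0 1 0 * unipotent 0 0 1) := by
    simp only [unipotent_mul]
    congr 1
  refine algHom_ext fun i => ?_
  rw [hu]
  simp only [polyAct_mul_apply, polyAct_unipotent_A hA, polyAct_unipotent_T hA hB]
  have := two_eq_zero (n := 6)
  fin_cases i <;> simp [actA, actT, actZ] <;> grind

theorem mem_invH_sylowSubgroup (hA : (D Agen : Matrix (Fin 6) (Fin 6) F2) = DA6)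
    (hB : (D Bgen : Matrix (Fin 6) (Fin 6) F2) = DB6) {p : MvPolynomial (Fin 6) F2} :
    p ∈ invH D sylowSubgroup ↔ actA p = p ∧ actT p = p ∧ actZ p = p := by
  constructor
  · intro h
    rw [← polyAct_unipotent_A hA, ← polyAct_unipotent_T hA hB, ← polyAct_unipotent_Z hA hB]
    exact ⟨h _ ⟨(0, 1, 0), rfl⟩, h _ ⟨(0, 0, 1), rfl⟩, h _ ⟨(1, 0, 0), rfl⟩⟩
  · rintro ⟨h₁, h₂, h₃⟩ _ ⟨⟨x, y, z⟩, rfl⟩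
    have fixes (σ : F2 → G3) (h0 : σ 0 = 1) (h1 : polyAct D (σ 1) p = p) (x : F2) :
        polyAct D (σ x) p = p := by
      fin_cases x
      · exact h0 ▸ polyAct_one_apply D p
      · exact h1
    have hx := fixes (fun x => unipotent x 0 0) unipotent_zero
      (by rw [polyAct_unipotent_Z hA hB, h₃])
    have hy := fixes (fun y => unipotent 0 y 0) unipotent_zero (by rw [polyAct_unipotent_A hA, h₁])
    have hz := fixes (fun z => unipotent 0 0 z) unipotent_zero
      (by rw [polyAct_unipotent_T hA hB, h₂])
    have hu : unipotent x y z = unipotent (x + y * z) 0 0 * unipotent 0 y 0 * unipotent 0 0 z := by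
      simp only [unipotent_mul]
      congr 1 <;> grind
    change polyAct D (unipotent x y z) p = p
    rw [hu, polyAct_mul_apply, polyAct_mul_apply, hx, hy, hz]

end SylowInvariants

open SylowInvariants in
/-- Let `D ≤ G` be a `2`-Sylow subgroup (so `|D| = 8`). Then there exist
algebraically independent homogeneous invariants `f'₁, …, f'₆ ∈ S[W'^*]^D` of degrees
`1, 1, 2, 2, 2, 4` and homogeneous invariants `g'₁ = 1, g'₂, g'₃, g'₄ ∈ S[W'^*]^D` of
degrees `0, 3, 3, 6` such that `S[W'^*]^D` is a free `𝔽₂[f'₁, …, f'₆]`-module with basis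
`{g'₁, g'₂, g'₃, g'₄}`; in particular `S[W'^*]^D` is Cohen-Macaulay. -/
theorem stmt13 (D : G3 →* GL (Fin 6) F2)
    (hA : (D Agen : Matrix (Fin 6) (Fin 6) F2) = DA6)
    (hB : (D Bgen : Matrix (Fin 6) (Fin 6) F2) = DB6)
    (P : Sylow 2 G3) :
    Nat.card (P : Subgroup G3) = 8 ∧
    ∃ f' : Fin 6 → (invH D P),
      AlgebraicIndependent F2 f' ∧
      (∀ i, (f' i : MvPolynomial (Fin 6) F2).IsHomogeneous (![1, 1, 2, 2, 2, 4] i)) ∧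
      ∃ g' : Fin 4 → (invH D P),
        g' 0 = 1 ∧
        (∀ j, (g' j : MvPolynomial (Fin 6) F2).IsHomogeneous (![0, 3, 3, 6] j)) ∧
        ∃ b : Module.Basis (Fin 4) (Algebra.adjoin F2 (Set.range f')) (invH D P),
          ∀ j, b j = g' j := by
  refine ⟨card_sylow P, ?_⟩
  obtain ⟨γ, hγ⟩ := exists_conj_sylowSubgroup P
  have hback (p : MvPolynomial (Fin 6) F2) : polyAct D γ (polyAct D γ⁻¹ p) = p := by
    simpa using polyAct_inv_apply D γ⁻¹ p
  have hmem {p : MvPolynomial (Fin 6) F2} :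
      p ∈ invH D P ↔ polyAct D γ p ∈ invH D sylowSubgroup := by
    constructor
    · intro hp σ hσ
      have := hp (γ * σ * γ⁻¹) ((hγ _).2 (by simpa [mul_assoc] using hσ))
      rw [polyAct_mul_apply, polyAct_mul_apply] at this
      have h := congrArg (polyAct D γ) this
      rwa [hback] at h
    · intro hp σ hσ
      have := hp _ ((hγ σ).1 hσ)
      rw [← polyAct_mul_apply] at this
      have h := congrArg (polyAct D γ⁻¹) this
      rw [polyAct_inv_apply, ← polyAct_mul_apply] at h
      simpa [mul_assoc] using h
  have hcubic₁ : cubic₁ ∈ invH D sylowSubgroup :=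
    (mem_invH_sylowSubgroup hA hB).2 ⟨actA_cubic₁, actT_cubic₁, actZ_cubic₁⟩
  have hcubic₂ : cubic₂ ∈ invH D sylowSubgroup :=
    (mem_invH_sylowSubgroup hA hB).2 ⟨actA_cubic₂, actT_cubic₂, actZ_cubic₂⟩
  have hprimary (i : Fin 6) : primary i ∈ invH D sylowSubgroup :=
    (mem_invH_sylowSubgroup hA hB).2 ⟨actA_primary i, actT_primary i, actZ_primary i⟩
  have hsecondary (j : Fin 4) : secondary j ∈ invH D sylowSubgroup := by
    fin_cases j
    exacts [one_mem _, hcubic₁, hcubic₂, mul_mem hcubic₁ hcubic₂]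
  obtain ⟨f', hf'⟩ : ∃ f' : Fin 6 → invH D P, ∀ i, (f' i : _) = polyAct D γ⁻¹ (primary i) :=
    ⟨fun i => ⟨_, hmem.2 (by rw [hback]; exact hprimary i)⟩, fun _ => rfl⟩
  obtain ⟨g', hg'⟩ : ∃ g' : Fin 4 → invH D P, ∀ j, (g' j : _) = polyAct D γ⁻¹ (secondary j) :=
    ⟨fun j => ⟨_, hmem.2 (by rw [hback]; exact hsecondary j)⟩, fun _ => rfl⟩
  have hg0 : g' 0 = 1 := Subtype.ext ((hg' 0).trans (map_one (polyAct D γ⁻¹)))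
  have hcomb (F : Fin 4 → MvPolynomial (Fin 6) F2) :
      ((∑ j, aeval f' (F j) * g' j : invH D P) : MvPolynomial (Fin 6) F2) =
        polyAct D γ⁻¹ (combination F) := by
    rw [map_combination, ← Subalgebra.coe_val, map_sum]
    refine Finset.sum_congr rfl fun j _ => ?_
    rw [map_mul, comp_aeval_apply]
    simp only [Subalgebra.coe_val, hf', hg']
  obtain ⟨hind, b, hb⟩ := exists_basis_of_aeval f' g' 0
    (fun F hF => eq_zero_of_combination_eq_zero (by
      rw [← hback (combination F), ← hcomb, hF, ZeroMemClass.coe_zero, map_zero]))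
    (fun p => by
      obtain ⟨h₁, h₂, h₃⟩ := (mem_invH_sylowSubgroup hA hB).1 (hmem.1 p.2)
      obtain ⟨F, hF⟩ := mem_range_combination_of_fixed h₁ h₂ h₃
      exact ⟨F, Subtype.ext (by rw [hcomb, hF, polyAct_inv_apply])⟩)
  exact ⟨f', hind, fun i => hf' i ▸ isHomogeneous_polyAct D _ (isHomogeneous_primary i), g', hg0,
    fun j => hg' j ▸ isHomogeneous_polyAct D _ (isHomogeneous_secondary j), b, hb⟩
end

section
/- There exist a homogeneous system of parameters f_1, …, f_6 of S[W'^*]^G of degrees 2, 3, 3, 4, 6, 7 and homogeneous invariants g_1, …, g_18 ∈ S[W'^*]^G with g_1 = 1, of degrees 0, 4, 5, 5, 6, 7, 8, 9, 9, 10, 10, 11, 12, 13, 14, 14, 15, 19 respectively, such that S[W'^*]^G is a free F_2[f_1, …, f_6]-module with basis {g_1, …, g_18}. -/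
set_option synthInstance.maxHeartbeats 1000000
set_option maxHeartbeats 1000000

open MvPolynomial

section Deformation

variable {k K σ : Type*} [CommRing k] [CommRing K] [Algebra k K]

/-- The substitution `xᵢ ↦ ξᵢ + ε vᵢ`, where `ε` is the variable of the outer polynomial ring. -/
noncomputable def deform (ξ : σ → K) (v : σ → MvPolynomial σ K) :
    MvPolynomial σ k →ₐ[k] Polynomial (MvPolynomial σ K) :=
  aeval fun i => Polynomial.C (C (ξ i)) + Polynomial.X * Polynomial.C (v i)

theorem coeff_zero_deform (ξ : σ → K) (v : σ → MvPolynomial σ K) (p : MvPolynomial σ k) :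
    (deform ξ v p).coeff 0 = C (aeval ξ p) := by
  induction p using MvPolynomial.induction_on with
  | C a =>
    simp only [deform, algHom_C]
    rw [Polynomial.algebraMap_apply, Polynomial.coeff_C_zero, MvPolynomial.algebraMap_apply]
  | add p q hp hq => simp [hp, hq]
  | mul_X p i hp => rw [map_mul, Polynomial.mul_coeff_zero, hp]; simp [deform]

theorem coeff_one_deform [Fintype σ] (ξ : σ → K) (v : σ → MvPolynomial σ K) (p : MvPolynomial σ k) :
    (deform ξ v p).coeff 1 = ∑ i, C (aeval ξ (pderiv i p)) * v i := by
  classical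
  induction p using MvPolynomial.induction_on with
  | C a =>
    simp only [deform, algHom_C]
    rw [Polynomial.algebraMap_apply, Polynomial.coeff_C]
    simp
  | add p q hp hq => simp [hp, hq, add_mul, Finset.sum_add_distrib]
  | mul_X p i hp =>
    have h0 := coeff_zero_deform ξ v p
    rw [map_mul]
    have hX : deform (k := k) ξ v (X i)
        = Polynomial.C (C (ξ i)) + Polynomial.X * Polynomial.C (v i) := by simp [deform]
    rw [hX, mul_add, Polynomial.coeff_add, Polynomial.coeff_mul_C, ← mul_assoc,
      mul_comm (deform ξ v p) Polynomial.X, mul_assoc, Polynomial.coeff_X_mul,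
      Polynomial.coeff_mul_C, h0, hp]
    simp only [Derivation.leibniz, smul_eq_mul, map_add, map_mul, aeval_X, add_mul, pderiv_X,
      Finset.sum_add_distrib, Finset.sum_mul]
    rw [add_comm]
    congr 1
    · rw [Finset.sum_eq_single i]
      · simp
      · intro b _ hb; simp [Pi.single_eq_of_ne hb.symm]
      · simp
    · exact Finset.sum_congr rfl fun _ _ => by ring

theorem aeval_X_mul [Fintype σ] {A : Type*} [CommRing A] [Algebra k A] (M : σ → Polynomial A)
    (p : MvPolynomial σ k) :
    aeval (fun i => Polynomial.X * M i) p
      = ∑ e ∈ Finset.range (p.totalDegree + 1),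
          Polynomial.X ^ e * aeval M (homogeneousComponent e p) := by
  have hom : ∀ (e : ℕ) (q : MvPolynomial σ k), q.IsHomogeneous e →
      aeval (fun i => Polynomial.X * M i) q = Polynomial.X ^ e * aeval M q := by
    intro e q hq
    rw [aeval_def, aeval_def, eval₂_eq', eval₂_eq', Finset.mul_sum]
    refine Finset.sum_congr rfl fun d hd => ?_
    have hde : ∑ i, d i = e := by
      rw [← hq (mem_support_iff.mp hd), Finsupp.weight_apply, Finsupp.sum_fintype] <;> simp
    simp only [mul_pow, Finset.prod_mul_distrib, Finset.prod_pow_eq_pow_sum, hde]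
    ring
  conv_lhs => rw [← sum_homogeneousComponent p, map_sum]
  exact Finset.sum_congr rfl fun e _ => hom e _ (homogeneousComponent_isHomogeneous e p)

/-- If `F` has value `c` and invertible Jacobian at a point `ξ` at which the values of `G` are
linearly independent, then the products of the `Gⱼ` with polynomials in `F` are independent. -/
theorem eq_zero_of_sum_aeval_mul_eq_zero [Fintype σ] [DecidableEq σ] {ι : Type*} [Fintype ι]
    (F : σ → MvPolynomial σ k) (G : ι → MvPolynomial σ k) (ξ : σ → K) (c : σ → k)
    (N : Matrix σ σ K) (hF : ∀ i, aeval ξ (F i) = algebraMap k K (c i))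
    (hJ : (Matrix.of fun i j => aeval ξ (pderiv j (F i))) * N = 1)
    (hG : LinearIndependent k fun j => aeval ξ (G j))
    (Q : ι → MvPolynomial σ k) (hQ : ∑ j, aeval F (Q j) * G j = 0) : Q = 0 := by
  set v : σ → MvPolynomial σ K := fun i => ∑ m, C (N i m) * X m with hv
  set Φ := deform (k := k) ξ v with hΦ
  set P : ι → MvPolynomial σ k := fun j => aeval (fun i => X i + C (c i)) (Q j) with hP
  have hQP : ∀ j, Q j = aeval (fun i => X i - C (c i)) (P j) := by
    intro j
    have : (aeval (fun i => X i - C (c i))).comp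
        (aeval (fun i => X i + C (c i)) : MvPolynomial σ k →ₐ[k] _) = AlgHom.id k _ := by
      ext i : 1
      simp
    exact (DFunLike.congr_fun this (Q j)).symm
  suffices hP0 : ∀ d j, homogeneousComponent d (P j) = 0 by
    funext j
    have : P j = 0 := by
      rw [← sum_homogeneousComponent (P j)]
      exact Finset.sum_eq_zero fun d _ => hP0 d j
    rw [hQP, this, map_zero, Pi.zero_apply]
  set M : σ → Polynomial (MvPolynomial σ K) := fun i => (Φ (F i)).divX with hM
  have hFM : ∀ i, Φ (F i - C (c i)) = Polynomial.X * M i := by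
    intro i
    have h1 := Polynomial.divX_mul_X_add (Φ (F i))
    rw [map_sub, ← h1, hΦ, coeff_zero_deform, hF]
    have : deform ξ v (C (c i)) = Polynomial.C (C (algebraMap k K (c i))) := by
      rw [algHom_C, Polynomial.algebraMap_apply, MvPolynomial.algebraMap_apply]
    rw [this, hM]
    ring
  have hM0 : ∀ i, (M i).coeff 0 = X i := by
    intro i
    rw [hM, Polynomial.coeff_divX, zero_add, hΦ, coeff_one_deform]
    simp only [hv, Finset.mul_sum]
    rw [Finset.sum_comm]
    have h2 : ∀ m, ∑ j, C (aeval ξ (pderiv j (F i))) * (C (N j m) * X m)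
        = C ((1 : Matrix σ σ K) i m) * (X m : MvPolynomial σ K) := by
      intro m
      rw [← hJ, Matrix.mul_apply, map_sum, Finset.sum_mul]
      exact Finset.sum_congr rfl fun j _ => by simp [mul_assoc]
    rw [Finset.sum_congr rfl fun m _ => h2 m]
    simp [Matrix.one_apply]
  have hPΦ : ∀ j, Φ (aeval F (Q j)) = aeval (fun i => Polynomial.X * M i) (P j) := by
    intro j
    have : (Φ.comp (aeval F)).comp (aeval (fun i => X i - C (c i)))
        = (aeval (fun i => Polynomial.X * M i) : MvPolynomial σ k →ₐ[k] _) := by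
      refine MvPolynomial.algHom_ext fun i => ?_
      rw [AlgHom.comp_apply, AlgHom.comp_apply, aeval_X, aeval_X, ← hFM i, map_sub, aeval_X,
        algHom_C, algebraMap_eq]
    rw [hQP j, ← this, AlgHom.comp_apply, AlgHom.comp_apply]
  have key : ∑ j, aeval (fun i => Polynomial.X * M i) (P j) * Φ (G j) = 0 := by
    rw [← map_zero Φ, ← hQ, map_sum]
    exact Finset.sum_congr rfl fun j _ => by rw [map_mul, hPΦ]
  have hcoeff : ∀ (d : ℕ), (∀ e < d, ∀ j, homogeneousComponent e (P j) = 0) →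
      ∀ j, (aeval (fun i => Polynomial.X * M i) (P j) * Φ (G j)).coeff d
        = map (algebraMap k K) (homogeneousComponent d (P j)) * C (aeval ξ (G j)) := by
    intro d hd j
    have hMev : ((aeval M (homogeneousComponent d (P j))) :
        Polynomial (MvPolynomial σ K)).coeff 0
          = map (algebraMap k K) (homogeneousComponent d (P j)) := by
      generalize homogeneousComponent d (P j) = q
      induction q using MvPolynomial.induction_on with
      | C a =>
        rw [algHom_C, map_C, Polynomial.algebraMap_apply, Polynomial.coeff_C_zero,
          MvPolynomial.algebraMap_apply]
      | add p q hp hq => simp [hp, hq]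
      | mul_X p i hp => rw [map_mul, Polynomial.mul_coeff_zero, hp]; simp [hM0]
    rw [aeval_X_mul, Finset.sum_mul, Polynomial.finsetSum_coeff]
    have hterm : ∀ e, (Polynomial.X ^ e * aeval M (homogeneousComponent e (P j)) * Φ (G j)).coeff d
        = if e = d then map (algebraMap k K) (homogeneousComponent d (P j)) * C (aeval ξ (G j))
          else 0 := by
      intro e
      rw [mul_assoc, Polynomial.coeff_X_pow_mul']
      rcases lt_trichotomy e d with h | h | h
      · simp [hd e h j, h.ne]
      · subst h
        rw [if_pos le_rfl, if_pos rfl, Nat.sub_self, Polynomial.mul_coeff_zero, hMev, hΦ,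
          coeff_zero_deform]
      · rw [if_neg (by lia), if_neg h.ne']
    simp only [hterm, Finset.sum_ite_eq', Finset.mem_range]
    split_ifs with h
    · rfl
    · rw [homogeneousComponent_eq_zero d (P j) (by lia)]
      simp
  intro d
  induction d using Nat.strong_induction_on with
  | _ d ih =>
    have h0 : ∑ j, map (algebraMap k K) (homogeneousComponent d (P j)) * C (aeval ξ (G j)) = 0 := by
      rw [← Finset.sum_congr rfl fun j _ => hcoeff d ih j, ← Polynomial.finsetSum_coeff, key,
        Polynomial.coeff_zero]
    intro j
    ext α
    have h1 := congrArg (coeff α) h0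
    rw [coeff_sum] at h1
    simp only [mul_comm _ (C _), coeff_C_mul, coeff_map, coeff_zero] at h1
    simp only [mul_comm _ (algebraMap k K _), ← Algebra.smul_def] at h1
    rw [coeff_zero]
    exact Fintype.linearIndependent_iff.mp hG _ h1 j

end Deformation

/-- The modulus `t¹⁸ + t³ + 1`. -/
noncomputable def modulus : Polynomial F2 := Polynomial.X ^ 18 + Polynomial.X ^ 3 + 1

theorem natDegree_modulus : modulus.natDegree = 18 := by
  unfold modulus; compute_degree!

theorem monic_modulus : modulus.Monic := by
  unfold modulus; monicity!

/-- The algebra `𝔽₂[t]/(t¹⁸ + t³ + 1)`. -/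
abbrev K18 := AdjoinRoot modulus

/-- The class of `t`. -/
noncomputable def tt : K18 := AdjoinRoot.root modulus

theorem two_eq_zero_K18 : (2 : K18) = 0 := by
  have := congrArg (algebraMap F2 K18) (show (2 : F2) = 0 from rfl)
  rwa [map_ofNat, map_zero] at this

theorem tt_pow : tt ^ 18 = tt ^ 3 + 1 := by
  have h : Polynomial.aeval tt modulus = 0 := by
    rw [tt, AdjoinRoot.aeval_eq, AdjoinRoot.mk_self]
  simp only [modulus, map_add, map_pow, Polynomial.aeval_X, map_one] at h
  linear_combination h - (tt ^ 3 + 1) * two_eq_zero_K18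

theorem K18_add_self (x : K18) : x + x = 0 := by
  linear_combination x * two_eq_zero_K18

/-- The element of `K18` whose coordinates are the binary digits of a natural number. -/
noncomputable def ofBits (k n : ℕ) : K18 :=
  ∑ i ∈ Finset.range k, if n.testBit i then tt ^ i else 0

theorem ofBits_xor (k a b : ℕ) : ofBits k (a ^^^ b) = ofBits k a + ofBits k b := by
  unfold ofBits
  rw [← Finset.sum_add_distrib]
  refine Finset.sum_congr rfl fun i _ => ?_
  rw [Nat.testBit_xor]
  cases a.testBit i <;> cases b.testBit i <;> simp [K18_add_self]

/-- Multiplication by `t` on binary digits. -/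
def mulT (a : ℕ) : ℕ := ((2 * a) ^^^ (if a.testBit 17 then 9 else 0)) % 2 ^ 18

theorem ofBits_zero (k : ℕ) : ofBits k 0 = 0 := by
  simp [ofBits]

theorem ofBits_mod (a : ℕ) : ofBits 18 (a % 2 ^ 18) = ofBits 18 a := by
  refine Finset.sum_congr rfl fun i hi => ?_
  rw [Nat.testBit_mod_two_pow]
  simp [Finset.mem_range.mp hi]

theorem ofBits_succ_eq (k a : ℕ) :
    ofBits (k + 1) a = (if a % 2 = 1 then 1 else 0) + tt * ofBits k (a / 2) := by
  unfold ofBits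
  rw [Finset.sum_range_succ', add_comm, Finset.mul_sum]
  congr 1
  · simp
  · refine Finset.sum_congr rfl fun i _ => ?_
    rw [Nat.testBit_succ, mul_ite, mul_zero, pow_succ']

theorem ofBits_mulT (a : ℕ) : ofBits 18 (mulT a) = tt * ofBits 18 a := by
  have h9 : ofBits 18 9 = tt ^ 18 := by
    rw [tt_pow]
    simp [ofBits, Finset.sum_range_succ, Nat.testBit, add_comm]
  have hs : ofBits 18 a = ofBits 17 a + if a.testBit 17 then tt ^ 17 else 0 := by
    rw [ofBits, Finset.sum_range_succ]; rfl
  have h2 : ofBits 18 (2 * a) = tt * ofBits 17 a := by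
    rw [ofBits_succ_eq]; simp
  rw [mulT, ofBits_mod, ofBits_xor, hs, h2]
  split_ifs
  · rw [h9]; ring
  · simp [ofBits]

/-- Multiplication on binary digits, by the lowest `k` digits of `a`. -/
def mulBits : ℕ → ℕ → ℕ → ℕ
  | 0, _, _ => 0
  | k + 1, a, b => (if a % 2 = 1 then b else 0) ^^^ mulBits k (a / 2) (mulT b)

theorem ofBits_mulBits (k a b : ℕ) :
    ofBits 18 (mulBits k a b) = ofBits k a * ofBits 18 b := by
  induction k generalizing a b with
  | zero => simp [mulBits, ofBits]
  | succ k ih =>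
    rw [mulBits, ofBits_xor, ih, ofBits_mulT, ofBits_succ_eq k a]
    split_ifs
    · ring
    · rw [ofBits_zero]; ring

theorem ofBits_one : ofBits 18 1 = 1 := by
  simp [ofBits, Finset.sum_range_succ, Nat.testBit]

theorem ofBits_two_pow {i : ℕ} (hi : i < 18) : ofBits 18 (2 ^ i) = tt ^ i := by
  unfold ofBits
  rw [Finset.sum_eq_single i]
  · simp
  · intro j _ hj
    rw [Nat.testBit_two_pow_of_ne hj.symm]; simp
  · simp [hi]

theorem span_tt_pow : Submodule.span F2 (Set.range fun i : Fin 18 => tt ^ (i : ℕ)) = ⊤ := by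
  have h := (AdjoinRoot.powerBasis' monic_modulus).basis.span_eq
  rw [eq_top_iff, ← h, Submodule.span_le]
  rintro _ ⟨i, rfl⟩
  rw [PowerBasis.basis_eq_pow]
  refine Submodule.subset_span ⟨⟨i, ?_⟩, ?_⟩
  · exact i.2.trans_eq ((AdjoinRoot.powerBasis'_dim monic_modulus).trans natDegree_modulus)
  · simp [tt]

theorem finrank_K18 : Module.finrank F2 K18 = 18 := by
  rw [(AdjoinRoot.powerBasis' monic_modulus).finrank, AdjoinRoot.powerBasis'_dim,
    natDegree_modulus]

/-- A polynomial given as a list of products of variables. -/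
noncomputable def pol (L : List (List (Fin 7))) : MvPolynomial (Fin 7) F2 :=
  (L.map fun m => (m.map X).prod).sum

/-- The value of a list of products at a point given by binary digits. -/
def polBits (x : Fin 7 → ℕ) (L : List (List (Fin 7))) : ℕ :=
  (L.map fun m => (m.map x).foldr (mulBits 18) 1).foldr (· ^^^ ·) 0

theorem ofBits_foldr_mulBits (l : List ℕ) :
    ofBits 18 (l.foldr (mulBits 18) 1) = (l.map (ofBits 18)).prod := by
  induction l with
  | nil => simp [ofBits_one]
  | cons a l ih => rw [List.foldr_cons, ofBits_mulBits, ih, List.map_cons, List.prod_cons]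

theorem ofBits_foldr_xor (l : List ℕ) :
    ofBits 18 (l.foldr (· ^^^ ·) 0) = (l.map (ofBits 18)).sum := by
  induction l with
  | nil => simp [ofBits]
  | cons a l ih => rw [List.foldr_cons, ofBits_xor, ih, List.map_cons, List.sum_cons]

theorem ofBits_polBits (x : Fin 7 → ℕ) (L : List (List (Fin 7))) :
    ofBits 18 (polBits x L) = aeval (fun i => ofBits 18 (x i)) (pol L) := by
  rw [polBits, ofBits_foldr_xor, pol, map_list_sum, List.map_map, List.map_map]
  congr 1
  refine List.map_congr_left fun m _ => ?_
  simp only [Function.comp_apply]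
  rw [ofBits_foldr_mulBits, map_list_prod, List.map_map, List.map_map]
  congr 1
  exact List.map_congr_left fun i _ => by simp

/-- The derivative of a product of variables, as a list of products. -/
def derivMon (k : Fin 7) : List (Fin 7) → List (List (Fin 7))
  | [] => []
  | i :: m => (if i = k then [m] else []) ++ (derivMon k m).map (i :: ·)

theorem pol_append (L L' : List (List (Fin 7))) : pol (L ++ L') = pol L + pol L' := by
  simp [pol]

theorem pol_map_cons (i : Fin 7) (L : List (List (Fin 7))) :
    pol (L.map (i :: ·)) = X i * pol L := by
  simp [pol, Function.comp_def, List.sum_map_mul_left]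

theorem pderiv_prod_X (k : Fin 7) (m : List (Fin 7)) :
    pderiv k ((m.map X).prod : MvPolynomial (Fin 7) F2) = pol (derivMon k m) := by
  induction m with
  | nil => simp [derivMon, pol]
  | cons i m ih =>
    rw [List.map_cons, List.prod_cons, Derivation.leibniz, ih, derivMon, pol_append, pol_map_cons,
      pderiv_X, smul_eq_mul, smul_eq_mul, add_comm]
    congr 1
    split_ifs with h
    · subst h; simp [pol]
    · rw [Pi.single_eq_of_ne h]; simp [pol]

theorem pderiv_pol (k : Fin 7) (L : List (List (Fin 7))) :
    pderiv k (pol L) = pol (L.flatMap (derivMon k)) := by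
  induction L with
  | nil => simp [pol]
  | cons m L ih =>
    rw [List.flatMap_cons, pol_append, ← ih, ← pderiv_prod_X, ← map_add]
    simp [pol]

/-- The lines of the Fano plane, each with its complement. -/
def fano : List (List (Fin 7) × List (Fin 7)) :=
  [([0, 1, 5], [2, 3, 4, 6]), ([0, 2, 3], [1, 4, 5, 6]), ([0, 4, 6], [1, 2, 3, 5]),
    ([1, 2, 4], [0, 3, 5, 6]), ([1, 3, 6], [0, 2, 4, 5]), ([2, 5, 6], [0, 1, 3, 4]),
    ([3, 4, 5], [0, 1, 2, 6])]

/-- The monomials of the `k`-th elementary symmetric polynomial. -/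
def esymmL (k : ℕ) : List (List (Fin 7)) := (List.finRange 7).sublistsLen k

/-- The monomials of the sum over all lines of the product of the `a`-th and the `b`-th
elementary symmetric polynomials of the complement. -/
def complL (a b : ℕ) : List (List (Fin 7)) :=
  fano.flatMap fun l =>
    (l.2.sublistsLen a).flatMap fun u => (l.2.sublistsLen b).map fun v => u ++ v

/-- The sum of the variables and the primary invariants. -/
def primL : Fin 7 → List (List (Fin 7)) :=
  ![esymmL 1, esymmL 2, esymmL 3, fano.map Prod.fst, esymmL 4, complL 2 4, esymmL 7]

/-- The factors of the secondary invariants. -/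
def secL : Fin 18 → List (List (List (Fin 7))) :=
  let b4 := complL 0 4
  let e5 := esymmL 5
  let z5 := complL 2 3
  let e6 := esymmL 6
  let h7 := complL 3 4
  ![[], [b4], [z5], [e5], [e6], [h7], [b4, b4], [b4, z5], [b4, e5], [z5, z5], [e5, z5],
    [z5, e6], [e6, e6], [e6, h7], [h7, h7], [b4, z5, z5], [z5, z5, z5], [e6, e6, h7]]

/-- The sum of the variables and the primary invariants. -/
noncomputable def prim (i : Fin 7) : MvPolynomial (Fin 7) F2 := pol (primL i)

/-- The secondary invariants. -/
noncomputable def sec (j : Fin 18) : MvPolynomial (Fin 7) F2 := ((secL j).map pol).prod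

/-- The coordinates of a point at which the primary invariants have values in `𝔽₂`. -/
def ptBits : Fin 7 → ℕ := ![0, 94445, 109289, 223717, 211336, 209864, 244129]

/-- The values of the primary invariants at that point. -/
def primVal : Fin 7 → ℕ := ![0, 0, 1, 0, 0, 1, 0]

/-- The inverse of the Jacobian matrix of the primary invariants at that point. -/
def jacInv : Fin 7 → Fin 7 → ℕ :=
  ![![0, 0, 0, 0, 0, 0, 33353],
    ![102024, 214840, 94445, 71796, 202938, 104264, 101275],
    ![183821, 185122, 109289, 234033, 6440, 218888, 140786],
    ![57886, 246650, 223717, 82713, 135358, 233220, 182939],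
    ![126622, 181602, 211336, 88957, 71692, 203852, 246537],
    ![189227, 259440, 209864, 249976, 4140, 73536, 158148],
    ![44847, 223090, 244129, 82521, 6412, 216136, 19574]]

/-- The Jacobian matrix of the primary invariants at that point. -/
def jac : Fin 7 → Fin 7 → ℕ :=
  ![![1, 1, 1, 1, 1, 1, 1],
    ![0, 94445, 109289, 223717, 211336, 209864, 244129],
    ![0, 146193, 167384, 145811, 134018, 138011, 171971],
    ![260, 175317, 207321, 236694, 211015, 167387, 240898],
    ![1, 17559, 214070, 93191, 75921, 27648, 206902],
    ![0, 38160, 225929, 70081, 99793, 259649, 181448],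
    ![33281, 0, 0, 0, 0, 0, 0]]

/-- The values of the secondary invariants at that point. -/
def secVal : Fin 18 → ℕ :=
  ![1, 2, 149796, 2084, 33281, 74896, 4, 37441, 4168, 8338, 65666, 2340, 36872, 65680, 133156,
    16676, 36928, 66706]

/-- The binary digits of `secMask i` select secondary invariants with sum of values `tⁱ`. -/
def secMask : Fin 18 → ℕ :=
  ![1, 2, 64, 400, 9218, 49220, 70032, 140834, 2056, 65665, 139266, 49164, 69888, 131106, 18444,
    65680, 139808, 16392]

theorem polBits_primL : ∀ i, polBits ptBits (primL i) = primVal i := by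
  decide +kernel

theorem polBits_deriv_primL :
    ∀ i k, polBits ptBits ((primL i).flatMap (derivMon k)) = jac i k := by
  decide +kernel

theorem jac_mul_jacInv : ∀ i k,
    ((List.finRange 7).map fun j => mulBits 18 (jac i j) (jacInv j k)).foldr (· ^^^ ·) 0
      = if i = k then 1 else 0 := by
  decide +kernel

theorem polBits_secL : ∀ j,
    ((secL j).map (polBits ptBits)).foldr (mulBits 18) 1 = secVal j := by
  decide +kernel

theorem secMask_xor : ∀ i : Fin 18,
    ((List.finRange 18).map fun j : Fin 18 =>
      if (secMask i).testBit (j : ℕ) then secVal j else 0).foldr (· ^^^ ·) 0 = 2 ^ (i : ℕ) := by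
  decide +kernel

/-- The point at which the invariants are evaluated. -/
noncomputable def pt (i : Fin 7) : K18 := ofBits 18 (ptBits i)

theorem aeval_pt_pol (L : List (List (Fin 7))) : aeval pt (pol L) = ofBits 18 (polBits ptBits L) :=
  (ofBits_polBits ptBits L).symm

theorem aeval_pt_sec (j : Fin 18) : aeval pt (sec j) = ofBits 18 (secVal j) := by
  rw [← polBits_secL, ofBits_foldr_mulBits, sec, map_list_prod, List.map_map, List.map_map]
  congr 1
  exact List.map_congr_left fun L _ => aeval_pt_pol L

theorem linearIndependent_aeval_pt_sec :
    LinearIndependent F2 fun j => aeval pt (sec j) := by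
  refine linearIndependent_of_top_le_span_of_card_eq_finrank ?_ (by simp [finrank_K18])
  rw [← span_tt_pow, Submodule.span_le]
  rintro _ ⟨i, rfl⟩
  simp only [← ofBits_two_pow i.2, ← secMask_xor i, ofBits_foldr_xor, List.map_map]
  refine list_sum_mem fun x hx => ?_
  obtain ⟨j, -, rfl⟩ := List.mem_map.mp hx
  simp only [Function.comp_apply]
  split_ifs
  · exact Submodule.subset_span ⟨j, aeval_pt_sec j⟩
  · rw [ofBits_zero]; exact Submodule.zero_mem _

/-- The products of the secondary invariants with polynomials in the primary ones are
independent. -/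
theorem prim_sec_independent (Q : Fin 18 → MvPolynomial (Fin 7) F2)
    (hQ : ∑ j, aeval prim (Q j) * sec j = 0) : Q = 0 := by
  refine eq_zero_of_sum_aeval_mul_eq_zero prim sec pt (fun i => (primVal i : F2))
    (Matrix.of fun i j => ofBits 18 (jacInv i j)) ?_ ?_ linearIndependent_aeval_pt_sec Q hQ
  · intro i
    rw [prim, aeval_pt_pol, polBits_primL]
    fin_cases i <;> simp [primVal, ofBits_zero, ofBits_one]
  · ext i k
    have h := congrArg (ofBits 18) (jac_mul_jacInv i k)
    rw [ofBits_foldr_xor, List.map_map] at h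
    rw [Matrix.mul_apply, Matrix.one_apply]
    simp only [Matrix.of_apply, prim, pderiv_pol, aeval_pt_pol, polBits_deriv_primL]
    rw [← List.sum_ofFn, List.ofFn_eq_map]
    simp only [Function.comp_def, ofBits_mulBits] at h
    rw [h]
    split_ifs
    · exact ofBits_one
    · exact ofBits_zero _

theorem rename_pol (τ : Fin 7 → Fin 7) (L : List (List (Fin 7))) :
    rename τ (pol L) = pol (L.map (List.map τ)) := by
  rw [pol, pol, map_list_sum, List.map_map, List.map_map]
  congr 1
  refine List.map_congr_left fun m _ => ?_
  simp [map_list_prod, List.map_map, Function.comp_def]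

/-- The elementary symmetric polynomials of a list of variables. -/
noncomputable def esymmOf (k : ℕ) (l : List (Fin 7)) : MvPolynomial (Fin 7) F2 :=
  pol (l.sublistsLen k)

theorem map_sublistsLen {α β : Type*} (g : α → β) (k : ℕ) (l : List α) :
    (l.map g).sublistsLen k = (l.sublistsLen k).map (List.map g) := by
  induction l generalizing k with
  | nil => cases k <;> simp
  | cons a l ih => cases k <;> simp [List.sublistsLen_succ_cons, ih, Function.comp_def]

theorem esymmOf_eq (k : ℕ) (l : List (Fin 7)) :
    esymmOf k l = ((l : Multiset (Fin 7)).map X : Multiset (MvPolynomial (Fin 7) F2)).esymm k := by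
  simp [esymmOf, pol, Multiset.esymm, Multiset.powersetCard_coe, map_sublistsLen,
    Function.comp_def]

theorem rename_esymmOf (τ : Fin 7 → Fin 7) (k : ℕ) (l : List (Fin 7)) :
    rename τ (esymmOf k l) = esymmOf k (l.map τ) := by
  rw [esymmOf, rename_pol, esymmOf, map_sublistsLen]

theorem pol_map_append (u : List (Fin 7)) (L : List (List (Fin 7))) :
    pol (L.map fun v => u ++ v) = (u.map X).prod * pol L := by
  simp [pol, Function.comp_def, List.sum_map_mul_left]

theorem pol_flatMap {α : Type*} (l : List α) (F : α → List (List (Fin 7))) :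
    pol (l.flatMap F) = (l.map fun x => pol (F x)).sum := by
  induction l with
  | nil => simp [pol]
  | cons x l ih => simp [pol_append, ih]

theorem pol_complL (a b : ℕ) :
    pol (complL a b) = ((fano.map fun l => (l.2 : Multiset (Fin 7))).map fun s =>
      (s.map X : Multiset (MvPolynomial (Fin 7) F2)).esymm a *
      (s.map X : Multiset (MvPolynomial (Fin 7) F2)).esymm b).sum := by
  rw [complL, pol_flatMap, List.map_map]
  congr 1
  refine List.map_congr_left fun l _ => ?_
  simp only [Function.comp_apply]
  rw [← esymmOf_eq, ← esymmOf_eq, pol_flatMap]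
  simp only [pol_map_append, List.sum_map_mul_right]
  rfl

/-- The permutation of the points of the Fano plane induced by `A`. -/
def permA : Equiv.Perm (Fin 7) :=
  ⟨![3, 1, 2, 0, 4, 6, 5], ![3, 1, 2, 0, 4, 6, 5], by decide, by decide⟩

/-- The permutation of the points of the Fano plane induced by `B`. -/
def permB : Equiv.Perm (Fin 7) :=
  ⟨![2, 0, 1, 4, 5, 3, 6], ![1, 2, 0, 5, 3, 4, 6], by decide, by decide⟩

theorem perm_fano_compl : ∀ τ ∈ [permA, permB],
    ((fano.map fun l => (l.2 : Multiset (Fin 7))).map (Multiset.map τ)).Perm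
      (fano.map fun l => (l.2 : Multiset (Fin 7))) := by
  have hA : ((fano.map fun l => (l.2 : Multiset (Fin 7))).map (Multiset.map permA)).Perm
      (fano.map fun l => (l.2 : Multiset (Fin 7))) := by
    decide +kernel
  have hB : ((fano.map fun l => (l.2 : Multiset (Fin 7))).map (Multiset.map permB)).Perm
      (fano.map fun l => (l.2 : Multiset (Fin 7))) := by
    decide +kernel
  simpa using ⟨hA, hB⟩

theorem perm_fano_fst : ∀ τ ∈ [permA, permB],
    ((fano.map fun l => (l.1 : Multiset (Fin 7))).map (Multiset.map τ)).Perm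
      (fano.map fun l => (l.1 : Multiset (Fin 7))) := by
  have hA : ((fano.map fun l => (l.1 : Multiset (Fin 7))).map (Multiset.map permA)).Perm
      (fano.map fun l => (l.1 : Multiset (Fin 7))) := by
    decide +kernel
  have hB : ((fano.map fun l => (l.1 : Multiset (Fin 7))).map (Multiset.map permB)).Perm
      (fano.map fun l => (l.1 : Multiset (Fin 7))) := by
    decide +kernel
  simpa using ⟨hA, hB⟩

/-- The invariants of the group generated by `permA` and `permB`. -/
noncomputable def invP : Subalgebra F2 (MvPolynomial (Fin 7) F2) where
  carrier := {p | ∀ τ ∈ [permA, permB], rename τ p = p}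
  mul_mem' ha hb τ hτ := by rw [map_mul, ha τ hτ, hb τ hτ]
  add_mem' ha hb τ hτ := by rw [map_add, ha τ hτ, hb τ hτ]
  algebraMap_mem' r τ _ := AlgHom.commutes _ r

theorem rename_esymm_map (τ : Fin 7 → Fin 7) (s : Multiset (Fin 7)) (k : ℕ) :
    rename τ ((s.map X : Multiset (MvPolynomial (Fin 7) F2)).esymm k)
      = ((s.map τ).map X : Multiset (MvPolynomial (Fin 7) F2)).esymm k := by
  induction s using Quotient.inductionOn with | h l =>
  simp only [Multiset.quot_mk_to_coe, Multiset.map_coe]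
  rw [← Multiset.map_coe, ← Multiset.map_coe, ← esymmOf_eq, ← esymmOf_eq, rename_esymmOf]

theorem pol_esymmL_mem_invP (k : ℕ) : pol (esymmL k) ∈ invP := fun τ _ => by
  have h : pol (esymmL k) = esymmOf k (List.finRange 7) := rfl
  rw [h, rename_esymmOf, esymmOf_eq, esymmOf_eq,
    Multiset.coe_eq_coe.mpr (Equiv.Perm.map_finRange_perm τ)]

theorem pol_complL_mem_invP (a b : ℕ) : pol (complL a b) ∈ invP := fun τ hτ => by
  rw [pol_complL, map_list_sum, ← ((perm_fano_compl τ hτ).map _).sum_eq]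
  simp only [List.map_map, Function.comp_def, map_mul, rename_esymm_map]

theorem pol_fano_mem_invP : pol (fano.map Prod.fst) ∈ invP := fun τ hτ => by
  have h : ∀ L : List (List (Fin 7)), pol L = ((L.map Multiset.ofList).map fun s =>
      (s.map X : Multiset (MvPolynomial (Fin 7) F2)).prod).sum := fun L => by
    simp [pol, Function.comp_def]
  rw [rename_pol, h, h]
  have := (((perm_fano_fst τ hτ).map fun s =>
      (s.map X : Multiset (MvPolynomial (Fin 7) F2)).prod)).sum_eq
  simpa [Function.comp_def] using this

theorem prim_eq (i : Fin 7) : prim i = (![pol (esymmL 1), pol (esymmL 2), pol (esymmL 3),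
    pol (fano.map Prod.fst), pol (esymmL 4), pol (complL 2 4), pol (esymmL 7)] : Fin 7 → _) i := by
  rw [prim, primL]
  generalize esymmL 1 = e1, esymmL 2 = e2, esymmL 3 = e3, fano.map Prod.fst = a3, esymmL 4 = e4,
    complL 2 4 = h6, esymmL 7 = e7
  fin_cases i <;> rfl

theorem prim_mem_invP (i : Fin 7) : prim i ∈ invP := by
  rw [prim_eq]
  have h1 := pol_esymmL_mem_invP
  have h2 := pol_complL_mem_invP
  have h3 := pol_fano_mem_invP
  fin_cases i
  exacts [h1 1, h1 2, h1 3, h3, h1 4, h2 2 4, h1 7]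

theorem exists_of_mem_secL {j : Fin 18} {L : List (List (Fin 7))} (hL : L ∈ secL j) :
    (∃ k, L = esymmL k) ∨ ∃ a b, L = complL a b := by
  have h : ∀ b4 e5 z5 e6 h7 : List (List (Fin 7)),
      L ∈ (![[], [b4], [z5], [e5], [e6], [h7], [b4, b4], [b4, z5], [b4, e5], [z5, z5], [e5, z5],
        [z5, e6], [e6, e6], [e6, h7], [h7, h7], [b4, z5, z5], [z5, z5, z5], [e6, e6, h7]] :
        Fin 18 → List (List (List (Fin 7)))) j → L = b4 ∨ L = e5 ∨ L = z5 ∨ L = e6 ∨ L = h7 := by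
    intro b4 e5 z5 e6 h7 h
    fin_cases j <;> simp at h <;> tauto
  obtain h | h | h | h | h := h _ _ _ _ _ hL
  exacts [.inr ⟨_, _, h⟩, .inl ⟨_, h⟩, .inr ⟨_, _, h⟩, .inl ⟨_, h⟩, .inr ⟨_, _, h⟩]

theorem sec_mem_invP (j : Fin 18) : sec j ∈ invP := by
  refine list_prod_mem fun p hp => ?_
  obtain ⟨L, hL, rfl⟩ := List.mem_map.mp hp
  obtain ⟨k, rfl⟩ | ⟨a, b, rfl⟩ := exists_of_mem_secL hL
  exacts [pol_esymmL_mem_invP k, pol_complL_mem_invP a b]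

/-- The group generated by `permA` and `permB`. -/
def fanoGroup : Subgroup (Equiv.Perm (Fin 7)) := Subgroup.closure {permA, permB}

theorem rename_of_mem_fanoGroup {p : MvPolynomial (Fin 7) F2} (hp : p ∈ invP)
    {τ : Equiv.Perm (Fin 7)} (hτ : τ ∈ fanoGroup) : rename τ p = p := by
  induction hτ using Subgroup.closure_induction with
  | mem x hx => exact hp x (by simpa using hx)
  | one => exact rename_id_apply p
  | mul x y _ _ hx hy =>
    rw [Equiv.Perm.coe_mul, ← rename_rename, hy, hx]
  | inv x _ hx =>
    conv_lhs => rw [← hx, rename_rename]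
    rw [← Equiv.Perm.coe_mul, inv_mul_cancel, Equiv.Perm.coe_one, rename_id_apply]

/-- The elements of `fanoGroup`, as products of elements of orders `7`, `3`, `4` and `2`. -/
def fanoList : List (Equiv.Perm (Fin 7)) :=
  let x := permB * permA
  let r := permA * permB * permA * permB * permB
  let y := permA * permB * permA * permB * permA * permB * permA * permB * permB * permA * permB
  (List.range 7).flatMap fun i => (List.range 3).flatMap fun j => (List.range 4).flatMap fun k =>
    (List.range 2).map fun l => x ^ i * y ^ j * r ^ k * permA ^ l

/-- An encoding of permutations by octal digits. -/
def permCode (τ : Equiv.Perm (Fin 7)) : ℕ :=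
  τ 0 + 8 * (τ 1 + 8 * (τ 2 + 8 * (τ 3 + 8 * (τ 4 + 8 * (τ 5 + 8 * τ 6)))))

/-- The codes of the elements of `fanoList`. -/
def fanoCodes : List ℕ :=
  [1754760, 1523851, 207627, 1582861, 806029, 117390, 1417486, 961800, 202517, 1579795, 1330259,
    181846, 954646, 1416464, 1690192, 999509, 1320550, 175203, 1740963, 1513120, 993888,
    1679461, 105637, 793254, 1004612, 1693762, 1154370, 922950, 677446, 1137731, 1644867,
    726852, 1148238, 920906, 1725962, 1266699, 723275, 1640268, 875532, 645134, 1709099,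
    1250858, 985194, 1672300, 629804, 858158, 1115758, 658539, 647717, 879137, 1378209, 689059,
    451619, 1369634, 822178, 361893, 1393539, 706433, 976129, 1434370, 379778, 836997, 583429,
    355075, 951090, 1410353, 641585, 868917, 329525, 559923, 1360947, 443954, 340270, 572712,
    1623272, 475370, 209706, 1586473, 543977, 82670, 1626338, 480480, 734048, 1651041, 89313,
    545510, 275814, 48482, 737625, 1655640, 351512, 577822, 50526, 281946, 1594138, 218393,
    43379, 272244, 807604, 121009, 1155441, 926576, 415408, 1102003, 813225, 123564, 369068,
    829864, 1107624, 417963, 140203, 1058729, 383376, 840084, 59220, 289107, 1069971, 153489,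
    942417, 1172304, 1055642, 136605, 680029, 1141336, 1382808, 692636, 189532, 1337434, 670320,
    1126517, 71925, 531188, 1324148, 178290, 1216754, 1447152, 92876, 551117, 1062285, 146314,
    1466570, 1238216, 702856, 1388940, 1445073, 1213142, 440342, 1358868, 1608404, 461013,
    1258005, 1718801, 437276, 1353758, 1084062, 396445, 1712669, 1255961, 1509529, 1737372,
    1096837, 408198, 1450694, 1223873, 1751169, 1520260, 469700, 1616069]

theorem map_permCode_fanoList : fanoList.map permCode = fanoCodes := by
  decide +kernel

theorem nodup_fanoCodes : fanoCodes.Nodup := by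
  decide +kernel

theorem permCode_mul_mem : fanoList.all (fun σ =>
    fanoCodes.contains (permCode (permA * σ)) &&
      fanoCodes.contains (permCode (permB * σ))) = true := by
  decide +kernel

theorem permCode_injective : Function.Injective permCode := by
  intro σ τ h
  have hσ : ∀ i, (σ i : ℕ) < 8 := fun i => by omega
  have hτ : ∀ i, (τ i : ℕ) < 8 := fun i => by omega
  have := hσ 0; have := hσ 1; have := hσ 2; have := hσ 3; have := hσ 4; have := hσ 5
  have := hσ 6; have := hτ 0; have := hτ 1; have := hτ 2; have := hτ 3; have := hτ 4
  have := hτ 5; have := hτ 6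
  unfold permCode at h
  ext i
  fin_cases i <;> simp <;> omega

theorem nodup_fanoList : fanoList.Nodup :=
  List.Nodup.of_map permCode (by rw [map_permCode_fanoList]; exact nodup_fanoCodes)

theorem mem_fanoList_of_permCode_mem {σ : Equiv.Perm (Fin 7)} (h : permCode σ ∈ fanoCodes) :
    σ ∈ fanoList := by
  rw [← map_permCode_fanoList] at h
  obtain ⟨τ, hτ, h⟩ := List.mem_map.mp h
  exact permCode_injective h ▸ hτ

theorem mem_fanoGroup_iff {σ : Equiv.Perm (Fin 7)} : σ ∈ fanoGroup ↔ σ ∈ fanoList := by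
  have hA : permA ∈ fanoGroup := Subgroup.subset_closure (by simp)
  have hB : permB ∈ fanoGroup := Subgroup.subset_closure (by simp)
  constructor
  · intro h
    have h2 : σ ∈ Submonoid.closure {permA, permB} := by
      rw [← Subgroup.closure_toSubmonoid_of_finite]; exact h
    clear h
    induction h2 using Submonoid.closure_induction_left with
    | one => exact mem_fanoList_of_permCode_mem (by decide +kernel)
    | mul_left x hx y hy ih =>
      have h := List.all_eq_true.mp permCode_mul_mem y ih
      rw [Bool.and_eq_true, List.contains_iff_mem, List.contains_iff_mem] at h
      obtain rfl | rfl := hx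
      exacts [mem_fanoList_of_permCode_mem h.1, mem_fanoList_of_permCode_mem h.2]
  · intro h
    simp only [fanoList, List.mem_flatMap, List.mem_map] at h
    obtain ⟨i, -, j, -, k, -, l, -, rfl⟩ := h
    have hz := mul_mem (mul_mem (mul_mem hA hB) hA) hB
    have hr := mul_mem hz hB
    have hy := mul_mem (mul_mem (mul_mem (mul_mem (mul_mem (mul_mem (mul_mem hz hA) hB) hA) hB) hB)
      hA) hB
    exact mul_mem (mul_mem (mul_mem (pow_mem (mul_mem hB hA) _) (pow_mem hy _)) (pow_mem hr _))
      (pow_mem hA _)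

/-- The `i`-th octal digit. -/
def digit (c i : ℕ) : ℕ := c / 8 ^ i % 8

theorem digit_permCode (σ : Equiv.Perm (Fin 7)) (i : Fin 7) : digit (permCode σ) i = σ i := by
  have hσ : ∀ i, (σ i : ℕ) < 8 := fun i => by omega
  have := hσ 0; have := hσ 1; have := hσ 2; have := hσ 3; have := hσ 4; have := hσ 5
  have := hσ 6
  unfold digit permCode
  fin_cases i <;> simp <;> omega

/-- The least element among `i, σ i, …, σᵏ i`. -/
def orbMin (σ : Equiv.Perm (Fin 7)) : ℕ → Fin 7 → Fin 7
  | 0, i => i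
  | k + 1, i => min i (orbMin σ k (σ i))

/-- The least element among the iterates of `i`, on codes. -/
def orbMinCode (c : ℕ) : ℕ → ℕ → ℕ
  | 0, i => i
  | k + 1, i => min i (orbMinCode c k (digit c i))

theorem orbMinCode_permCode (σ : Equiv.Perm (Fin 7)) (k : ℕ) (i : Fin 7) :
    orbMinCode (permCode σ) k i = orbMin σ k i := by
  induction k generalizing i with
  | zero => rfl
  | succ k ih => rw [orbMinCode, digit_permCode, ih, orbMin, Fin.coe_min]

theorem exists_orbMin_eq (σ : Equiv.Perm (Fin 7)) (k : ℕ) (i : Fin 7) :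
    ∃ l : ℕ, orbMin σ k i = σ^[l] i := by
  induction k generalizing i with
  | zero => exact ⟨0, rfl⟩
  | succ k ih =>
    obtain ⟨l, hl⟩ := ih (σ i)
    rw [orbMin]
    obtain h | h := min_choice i (orbMin σ k (σ i))
    · exact ⟨0, h⟩
    · exact ⟨l + 1, h.trans hl⟩

/-- The number of `i` whose orbit has least element `r`, on codes. -/
def orbCardCode (c r : ℕ) : ℕ := (List.range 7).countP fun i => orbMinCode c 6 i == r

/-- The cycle type of an element of `fanoGroup` with a given longest cycle length. -/
def cycleLengths : ℕ → List ℕ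
  | 1 => [1, 1, 1, 1, 1, 1, 1]
  | 2 => [2, 2, 1, 1, 1, 0, 0]
  | 3 => [3, 3, 1, 0, 0, 0, 0]
  | 4 => [4, 2, 1, 0, 0, 0, 0]
  | _ => [7, 0, 0, 0, 0, 0, 0]

/-- The longest cycle length, on codes. -/
def longestCode (c : ℕ) : ℕ := ((List.range 7).map (orbCardCode c)).foldr max 0

theorem orbMinCode_fanoCodes : fanoCodes.all (fun c => (List.range 7).all fun i =>
    orbMinCode c 6 (digit c i) == orbMinCode c 6 i) = true := by
  decide +kernel

theorem orbCardCode_fanoCodes : fanoCodes.all (fun c =>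
    ((List.range 7).map (orbCardCode c)).isPerm (cycleLengths (longestCode c))) = true := by
  decide +kernel

theorem longestCode_fanoCodes : (fanoCodes.map longestCode).Perm
    (List.replicate 1 1 ++ List.replicate 21 2 ++ List.replicate 56 3 ++ List.replicate 42 4 ++
      List.replicate 48 7) := by
  decide +kernel

/-- The power series `∑ tᵐ` over all multiples `m` of `w`. -/
noncomputable def multSeries (w : ℕ) : PowerSeries ℤ :=
  PowerSeries.mk fun m => if w ∣ m then 1 else 0

theorem multSeries_zero : multSeries 0 = 1 := by
  ext m
  simp [multSeries, PowerSeries.coeff_one]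

theorem one_sub_mul_multSeries {w : ℕ} (hw : 0 < w) :
    (1 - PowerSeries.X ^ w) * multSeries w = 1 := by
  ext m
  rw [sub_mul, one_mul, map_sub, PowerSeries.coeff_X_pow_mul', PowerSeries.coeff_one]
  simp only [multSeries, PowerSeries.coeff_mk]
  by_cases hm : m = 0
  · subst hm; simp [hw.ne']
  · by_cases h : w ≤ m
    · have h' : w ∣ m - w ↔ w ∣ m := by
        rw [← Nat.dvd_add_self_right (n := m - w), Nat.sub_add_cancel h]
      simp [h, hm, h']
    · have : ¬ w ∣ m := fun h' => h (Nat.le_of_dvd (Nat.pos_of_ne_zero hm) h')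
      simp [h, hm, this]

theorem coeff_prod_multSeries {ι : Type*} [Fintype ι] [DecidableEq ι] (w : ι → ℕ) (n : ℕ) :
    PowerSeries.coeff n (∏ i, multSeries (w i))
      = Nat.card {l : ι → ℕ // ∑ i, l i = n ∧ ∀ i, w i ∣ l i} := by
  rw [PowerSeries.coeff_prod]
  simp only [multSeries, PowerSeries.coeff_mk, Finset.prod_ite_zero, Finset.prod_const_one]
  rw [Finset.sum_boole, ← Nat.card_eq_finsetCard]
  congr 1
  refine Nat.card_congr (Finsupp.equivFunOnFinite.subtypeEquiv fun l => ?_)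
  simp

/-- A permutation with orbit representatives `q` has as many invariant functions of total `n` as
there are families of multiples of the orbit sizes. -/
theorem card_fixed_eq (σ : Equiv.Perm (Fin 7)) (q : Fin 7 → Fin 7) (hq : ∀ i, q (σ i) = q i)
    (hq' : ∀ i, ∃ k : ℕ, q i = σ^[k] i) (n : ℕ) :
    (Nat.card {e : Fin 7 → ℕ // ∑ i, e i = n ∧ ∀ i, e (σ i) = e i} : ℤ)
      = PowerSeries.coeff n (∏ r, multSeries (Finset.univ.filter fun i => q i = r).card) := by
  set w : Fin 7 → ℕ := fun r => (Finset.univ.filter fun i => q i = r).card with hw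
  rw [coeff_prod_multSeries]
  have hit : ∀ {α : Type} (e : Fin 7 → α), (∀ i, e (σ i) = e i) → ∀ i, e (q i) = e i := by
    intro α e he i
    obtain ⟨k, hk⟩ := hq' i
    rw [hk]
    clear hk
    induction k with
    | zero => rfl
    | succ k ih => rw [Function.iterate_succ_apply', he, ih]
  have hsum : ∀ e : Fin 7 → ℕ, ∑ r, w r * e r = ∑ i, e (q i) := fun e => by
    rw [← Finset.sum_fiberwise_of_maps_to (s := Finset.univ) (f := fun i => e (q i)) (g := q)
      (t := Finset.univ) (fun _ _ => Finset.mem_univ _)]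
    refine Finset.sum_congr rfl fun r _ => ?_
    rw [Finset.sum_congr rfl (g := fun _ => e r) (by simp +contextual), Finset.sum_const,
      smul_eq_mul]
  have hpos : ∀ i, 0 < w (q i) := fun i => Finset.card_pos.mpr ⟨i, by simp⟩
  congr 1
  refine Nat.card_congr ⟨fun e => ⟨fun r => w r * e.1 r, ?_, fun r => dvd_mul_right _ _⟩,
    fun l => ⟨fun i => l.1 (q i) / w (q i), ?_, fun i => by simp only [hq]⟩, ?_, ?_⟩
  · rw [hsum]
    refine Eq.trans ?_ e.2.1
    exact Finset.sum_congr rfl fun i _ => hit _ e.2.2 i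
  · rw [← hsum fun i => l.1 i / w i]
    refine Eq.trans ?_ l.2.1
    exact Finset.sum_congr rfl fun i _ => Nat.mul_div_cancel' (l.2.2 i)
  · rintro ⟨e, he, he'⟩
    ext i
    simp only
    rw [Nat.mul_div_cancel_left _ (hpos i), hit e he']
  · rintro ⟨l, hl, hl'⟩
    ext r
    simp only
    by_cases h : w r = 0
    · rw [h, zero_mul]
      exact (Nat.eq_zero_of_zero_dvd (h ▸ hl' r)).symm
    · obtain ⟨i, hi⟩ := Finset.card_pos.mp (Nat.pos_of_ne_zero h)
      have hi : q i = r := by simpa using hi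
      have : q r = r := by rw [← hi]; exact hit q hq i
      rw [this, Nat.mul_div_cancel' (hl' r)]

theorem orbMin_apply {σ : Equiv.Perm (Fin 7)} (hσ : σ ∈ fanoList) (i : Fin 7) :
    orbMin σ 6 (σ i) = orbMin σ 6 i := by
  have hc : permCode σ ∈ fanoCodes := map_permCode_fanoList ▸ List.mem_map_of_mem hσ
  have h := List.all_eq_true.mp (List.all_eq_true.mp orbMinCode_fanoCodes _ hc) i (by simp)
  rw [beq_iff_eq, digit_permCode, orbMinCode_permCode, orbMinCode_permCode] at h
  exact Fin.ext h

theorem card_orbMin (σ : Equiv.Perm (Fin 7)) (r : Fin 7) :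
    (Finset.univ.filter fun i => orbMin σ 6 i = r).card = orbCardCode (permCode σ) r := by
  have h : ∀ i : Fin 7, (orbMin σ 6 i = r) ↔ orbMinCode (permCode σ) 6 i = r := fun i => by
    rw [orbMinCode_permCode, Fin.val_inj]
  simp only [h, orbCardCode]
  rw [← List.map_coe_finRange_eq_range, List.countP_map, Finset.card_def, Finset.filter_val,
    ← Multiset.countP_eq_card_filter]
  change List.countP _ (List.finRange 7) = _
  congr 1

theorem card_fixed_of_mem {σ : Equiv.Perm (Fin 7)} (hσ : σ ∈ fanoList) (n : ℕ) :
    (Nat.card {e : Fin 7 → ℕ // ∑ i, e i = n ∧ ∀ i, e (σ i) = e i} : ℤ)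
      = PowerSeries.coeff n ((cycleLengths (longestCode (permCode σ))).map multSeries).prod := by
  have hc : permCode σ ∈ fanoCodes := map_permCode_fanoList ▸ List.mem_map_of_mem hσ
  have h := List.isPerm_iff.mp (List.all_eq_true.mp orbCardCode_fanoCodes _ hc)
  rw [card_fixed_eq σ (orbMin σ 6) (orbMin_apply hσ) (exists_orbMin_eq σ 6) n,
    ← (h.map multSeries).prod_eq]
  congr 1
  simp only [card_orbMin]
  rw [← List.map_coe_finRange_eq_range, List.map_map, List.map_map, ← List.prod_ofFn,
    List.ofFn_eq_map]
  rfl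

/-- The degrees of the sum of the variables and of the primary invariants. -/
def primDeg : Fin 7 → ℕ := ![1, 2, 3, 3, 4, 6, 7]

/-- The degrees of the secondary invariants. -/
def secDeg : Fin 18 → ℕ := ![0, 4, 5, 5, 6, 7, 8, 9, 9, 10, 10, 11, 12, 13, 14, 14, 15, 19]

/-- Molien's formula for `fanoGroup`. -/
theorem molien_identity :
    168 * ((∑ j, PowerSeries.X ^ secDeg j) * ∏ i, multSeries (primDeg i))
      = multSeries 1 ^ 7 + 21 * (multSeries 1 ^ 3 * multSeries 2 ^ 2) +
        56 * (multSeries 1 * multSeries 3 ^ 2) + 42 * (multSeries 1 * multSeries 2 * multSeries 4)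
        + 48 * multSeries 7 := by
  have key : ∀ {u₁ u₂ u₃ u₄ u₆ u₇ g₁ g₂ g₃ g₄ g₆ g₇ s : PowerSeries ℤ},
      u₁ * g₁ = 1 → u₂ * g₂ = 1 → u₃ * g₃ = 1 → u₄ * g₄ = 1 → u₆ * g₆ = 1 → u₇ * g₇ = 1 →
      168 * s * u₁ ^ 6 * u₂ = u₂ ^ 2 * u₃ ^ 2 * u₄ * u₆ * u₇ +
        21 * (u₁ ^ 4 * u₃ ^ 2 * u₄ * u₆ * u₇) + 56 * (u₁ ^ 6 * u₂ ^ 2 * u₄ * u₆ * u₇) +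
        42 * (u₁ ^ 6 * u₂ * u₃ ^ 2 * u₆ * u₇) +
        48 * (u₁ ^ 7 * u₂ ^ 2 * u₃ ^ 2 * u₄ * u₆) →
      168 * (s * (g₁ * g₂ * g₃ * g₃ * g₄ * g₆ * g₇)) = g₁ ^ 7 + 21 * (g₁ ^ 3 * g₂ ^ 2) +
        56 * (g₁ * g₃ ^ 2) + 42 * (g₁ * g₂ * g₄) + 48 * g₇ := by
    intro u₁ u₂ u₃ u₄ u₆ u₇ g₁ g₂ g₃ g₄ g₆ g₇ s h₁ h₂ h₃ h₄ h₆ h₇ h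
    have e := congrArg (· * (g₁ ^ 7 * g₂ ^ 2 * g₃ ^ 2 * g₄ * g₆ * g₇)) h
    rw [show 168 * s * u₁ ^ 6 * u₂ * (g₁ ^ 7 * g₂ ^ 2 * g₃ ^ 2 * g₄ * g₆ * g₇)
      = 168 * s * (u₁ * g₁) ^ 6 * (u₂ * g₂) * (g₁ * g₂ * g₃ * g₃ * g₄ * g₆ * g₇) by ring,
      show (u₂ ^ 2 * u₃ ^ 2 * u₄ * u₆ * u₇ +
        21 * (u₁ ^ 4 * u₃ ^ 2 * u₄ * u₆ * u₇) + 56 * (u₁ ^ 6 * u₂ ^ 2 * u₄ * u₆ * u₇) +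
        42 * (u₁ ^ 6 * u₂ * u₃ ^ 2 * u₆ * u₇) +
        48 * (u₁ ^ 7 * u₂ ^ 2 * u₃ ^ 2 * u₄ * u₆)) * (g₁ ^ 7 * g₂ ^ 2 * g₃ ^ 2 * g₄ * g₆ * g₇)
      = (u₂ * g₂) ^ 2 * (u₃ * g₃) ^ 2 * (u₄ * g₄) * (u₆ * g₆) * (u₇ * g₇) * g₁ ^ 7 +
        21 * ((u₁ * g₁) ^ 4 * (u₃ * g₃) ^ 2 * (u₄ * g₄) * (u₆ * g₆) * (u₇ * g₇) *
          (g₁ ^ 3 * g₂ ^ 2)) +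
        56 * ((u₁ * g₁) ^ 6 * (u₂ * g₂) ^ 2 * (u₄ * g₄) * (u₆ * g₆) * (u₇ * g₇) *
          (g₁ * g₃ ^ 2)) +
        42 * ((u₁ * g₁) ^ 6 * (u₂ * g₂) * (u₃ * g₃) ^ 2 * (u₆ * g₆) * (u₇ * g₇) *
          (g₁ * g₂ * g₄)) +
        48 * ((u₁ * g₁) ^ 7 * (u₂ * g₂) ^ 2 * (u₃ * g₃) ^ 2 * (u₄ * g₄) * (u₆ * g₆) * g₇) by ring,
      h₁, h₂, h₃, h₄, h₆, h₇] at e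
    linear_combination e
  have hu : ∀ w : ℕ, 0 < w → (1 - PowerSeries.X ^ w) * multSeries w = 1 :=
    fun w hw => one_sub_mul_multSeries hw
  rw [Fin.prod_univ_seven]
  refine key (hu 1 (by simp)) (hu 2 (by simp)) (hu 3 (by simp)) (hu 4 (by simp)) (hu 6 (by simp))
    (hu 7 (by simp)) ?_
  simp only [Fin.sum_univ_succ, secDeg, Fin.sum_univ_zero, Matrix.cons_val_zero,
    Matrix.cons_val_succ]
  ring

/-- The exponent vectors of degree `n`. -/
abbrev Expo (n : ℕ) := {e : Fin 7 → ℕ // ∑ i, e i = n}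

/-- The action of `fanoGroup` on exponent vectors. -/
instance (n : ℕ) : MulAction fanoGroup (Expo n) where
  smul σ e := ⟨fun i => e.1 ((σ⁻¹ : fanoGroup).1 i), by
    rw [Equiv.sum_comp (σ⁻¹ : fanoGroup).1 e.1]; exact e.2⟩
  one_smul _ := rfl
  mul_smul σ τ e := Subtype.ext <| funext fun i => by
    change e.1 (((σ * τ)⁻¹ : fanoGroup).1 i) = e.1 ((τ⁻¹ : fanoGroup).1 ((σ⁻¹ : fanoGroup).1 i))
    rw [mul_inv_rev]; rfl

theorem smul_expo_apply {n : ℕ} (σ : fanoGroup) (e : Expo n) (i : Fin 7) :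
    (σ • e).1 i = e.1 ((σ⁻¹ : fanoGroup).1 i) := rfl

instance (n : ℕ) : Finite (Expo n) :=
  (Set.finite_Iic fun _ : Fin 7 => n).subset fun e he i => by
    have : e i ≤ ∑ i, e i := Finset.single_le_sum (fun _ _ => Nat.zero_le _)
        (Finset.mem_univ i)
    exact this.trans_eq he

/-- The orbits of `fanoGroup` on exponent vectors of degree `n`. -/
abbrev ExpoOrbit (n : ℕ) := Quotient (MulAction.orbitRel fanoGroup (Expo n))

theorem card_fixedBy (n : ℕ) (σ : fanoGroup) :
    Nat.card (MulAction.fixedBy (Expo n) σ)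
      = Nat.card {e : Fin 7 → ℕ // ∑ i, e i = n ∧ ∀ i, e (σ.1 i) = e i} := by
  refine Nat.card_congr ((Equiv.subtypeSubtypeEquivSubtypeInter (fun e : Fin 7 → ℕ => ∑ i, e i = n)
    (fun e => ∀ i, e (σ.1 i) = e i)).symm.trans
    (Equiv.subtypeEquivRight fun e => ?_)).symm
  rw [MulAction.mem_fixedBy, Subtype.ext_iff, funext_iff]
  simp only [smul_expo_apply]
  refine ⟨fun h i => ?_, fun h i => ?_⟩
  · rw [← h]; exact congrArg e.1 (σ.1.apply_symm_apply i)
  · rw [← h]; exact congrArg e.1 (σ.1.symm_apply_apply i)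

theorem card_expoOrbit (n : ℕ) : (Nat.card (ExpoOrbit n) : ℤ)
    = PowerSeries.coeff n ((∑ j, PowerSeries.X ^ secDeg j) * ∏ i, multSeries (primDeg i)) := by
  classical
  have := Fintype.ofFinite fanoGroup
  have : ∀ g : fanoGroup, Fintype (MulAction.fixedBy (Expo n) g) := fun g => Fintype.ofFinite _
  have := Fintype.ofFinite (ExpoOrbit n)
  have hB := MulAction.sum_card_fixedBy_eq_card_orbits_mul_card_group fanoGroup (Expo n)
  have hsum : ∀ φ : Equiv.Perm (Fin 7) → ℤ, ∑ σ : fanoGroup, φ σ = (fanoList.map φ).sum := by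
    intro φ
    rw [← List.sum_toFinset _ nodup_fanoList]
    exact (Finset.sum_subtype _ (fun σ => by rw [List.mem_toFinset, mem_fanoGroup_iff]) φ).symm
  have hcard : (Fintype.card fanoGroup : ℤ) = 168 := by
    have := hsum fun _ => 1
    have hlen : fanoCodes.length = 168 := by decide +kernel
    rw [List.map_const', ← List.length_map permCode, map_permCode_fanoList, hlen,
      List.sum_replicate, Finset.sum_const, nsmul_one, nsmul_one] at this
    exact_mod_cast this
  have hfix : (∑ g : fanoGroup, (Fintype.card (MulAction.fixedBy (Expo n) g) : ℤ))
      = PowerSeries.coeff n ((fanoCodes.map longestCode).map fun k =>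
        ((cycleLengths k).map multSeries).prod).sum := by
    simp only [← Nat.card_eq_fintype_card, card_fixedBy]
    rw [hsum fun σ => (Nat.card {e : Fin 7 → ℕ // ∑ i, e i = n ∧ ∀ i, e (σ i) = e i} : ℤ),
      ← map_permCode_fanoList, map_list_sum, List.map_map, List.map_map, List.map_map]
    congr 1
    exact List.map_congr_left fun σ hσ => card_fixed_of_mem hσ n
  have hZ := congrArg (Nat.cast : ℕ → ℤ) hB
  rw [Nat.cast_sum, Nat.cast_mul, hfix, hcard, (longestCode_fanoCodes.map _).sum_eq] at hZ
  have hM := congrArg (PowerSeries.coeff n) molien_identity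
  rw [Nat.card_eq_fintype_card]
  have h168 : ∀ p : PowerSeries ℤ, PowerSeries.coeff n (168 * p) = 168 * PowerSeries.coeff n p :=
    fun p => by
      rw [show (168 : PowerSeries ℤ) = PowerSeries.C (168 : ℤ) from rfl, PowerSeries.coeff_C_mul]
  rw [h168] at hM
  refine mul_left_cancel₀ (show (168 : ℤ) ≠ 0 by norm_num) ?_
  rw [hM, mul_comm, ← hZ]
  congr 1
  simp only [List.map_append, List.map_replicate, List.sum_append, List.sum_replicate, cycleLengths,
    List.map_cons, List.map_nil, List.prod_cons, List.prod_nil, multSeries_zero, nsmul_eq_mul]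
  push_cast
  ring

/-- The monomials of degree `n` in the primary invariants, times secondary invariants. -/
abbrev HironakaIndex (n : ℕ) :=
  Σ j : Fin 18, {α : Fin 7 → ℕ // secDeg j + ∑ i, primDeg i * α i = n}

theorem primDeg_pos (i : Fin 7) : 0 < primDeg i := by
  fin_cases i <;> simp [primDeg]

theorem card_secondary (d n : ℕ) :
    (Nat.card {α : Fin 7 → ℕ // d + ∑ i, primDeg i * α i = n} : ℤ)
      = PowerSeries.coeff n (PowerSeries.X ^ d * ∏ i, multSeries (primDeg i)) := by
  rw [PowerSeries.coeff_X_pow_mul']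
  split_ifs with h
  · rw [coeff_prod_multSeries]
    congr 1
    refine Nat.card_congr ⟨fun α => ⟨fun i => primDeg i * α.1 i, by have := α.2; lia,
      fun i => dvd_mul_right _ _⟩, fun l => ⟨fun i => l.1 i / primDeg i, ?_⟩, ?_, ?_⟩
    · rw [Finset.sum_congr rfl fun i _ => Nat.mul_div_cancel' (l.2.2 i), l.2.1]; lia
    · rintro ⟨α, hα⟩
      ext i
      exact Nat.mul_div_cancel_left _ (primDeg_pos i)
    · rintro ⟨l, hl, hl'⟩
      ext i
      exact Nat.mul_div_cancel' (hl' i)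
  · rw [Nat.cast_eq_zero, Nat.card_eq_zero]
    exact .inl ⟨fun α => h (by have := α.2; lia)⟩

instance (n : ℕ) (j : Fin 18) : Finite {α : Fin 7 → ℕ // secDeg j + ∑ i, primDeg i * α i = n} :=
  (Set.finite_Iic fun _ : Fin 7 => n).subset fun α hα i => by
    have h1 : primDeg i * α i ≤ ∑ i, primDeg i * α i :=
      Finset.single_le_sum (f := fun i => primDeg i * α i) (fun _ _ => Nat.zero_le _)
        (Finset.mem_univ i)
    have h2 : α i ≤ primDeg i * α i := Nat.le_mul_of_pos_left _ (primDeg_pos i)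
    have h3 : secDeg j + ∑ i, primDeg i * α i = n := hα
    change α i ≤ n
    lia

theorem card_hironakaIndex (n : ℕ) : Nat.card (HironakaIndex n) = Nat.card (ExpoOrbit n) := by
  have h : (Nat.card (HironakaIndex n) : ℤ) = Nat.card (ExpoOrbit n) := by
    rw [card_expoOrbit, Nat.card_sigma, Nat.cast_sum, Finset.sum_mul, map_sum]
    exact Finset.sum_congr rfl fun j _ => card_secondary _ _
  exact_mod_cast h

theorem isHomogeneous_pol {L : List (List (Fin 7))} {d : ℕ} (h : ∀ m ∈ L, m.length = d) :
    (pol L).IsHomogeneous d := by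
  refine (mem_homogeneousSubmodule d _).mp (list_sum_mem fun p hp => ?_)
  obtain ⟨m, hm, rfl⟩ := List.mem_map.mp hp
  rw [mem_homogeneousSubmodule, ← h m hm]
  clear hm hp
  induction m with
  | nil => simpa using isHomogeneous_one (Fin 7) F2
  | cons i m ih =>
    rw [List.map_cons, List.prod_cons, List.length_cons, add_comm]
    exact (isHomogeneous_X F2 i).mul ih

theorem isHomogeneous_esymmL (k : ℕ) : (pol (esymmL k)).IsHomogeneous k :=
  isHomogeneous_pol fun _ hm => (List.mem_sublistsLen.mp hm).2

theorem isHomogeneous_complL (a b : ℕ) : (pol (complL a b)).IsHomogeneous (a + b) := by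
  refine isHomogeneous_pol fun m hm => ?_
  simp only [complL, List.mem_flatMap, List.mem_map] at hm
  obtain ⟨l, -, u, hu, v, hv, rfl⟩ := hm
  rw [List.length_append, (List.mem_sublistsLen.mp hu).2, (List.mem_sublistsLen.mp hv).2]

theorem prim_isHomogeneous (i : Fin 7) : (prim i).IsHomogeneous (primDeg i) := by
  rw [prim_eq]
  have h1 := isHomogeneous_esymmL
  have h2 := isHomogeneous_complL
  have h3 : (pol (fano.map Prod.fst)).IsHomogeneous 3 := isHomogeneous_pol (by simp [fano])
  fin_cases i
  exacts [h1 1, h1 2, h1 3, h3, h1 4, h2 2 4, h1 7]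

theorem sec_isHomogeneous (j : Fin 18) : (sec j).IsHomogeneous (secDeg j) := by
  have h : ∀ b4 e5 z5 e6 h7 : List (List (Fin 7)), (pol b4).IsHomogeneous 4 →
      (pol e5).IsHomogeneous 5 → (pol z5).IsHomogeneous 5 → (pol e6).IsHomogeneous 6 →
      (pol h7).IsHomogeneous 7 →
      ((((![[], [b4], [z5], [e5], [e6], [h7], [b4, b4], [b4, z5], [b4, e5], [z5, z5], [e5, z5],
        [z5, e6], [e6, e6], [e6, h7], [h7, h7], [b4, z5, z5], [z5, z5, z5], [e6, e6, h7]] :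
        Fin 18 → List (List (List (Fin 7)))) j).map pol).prod).IsHomogeneous (secDeg j) := by
    intro b4 e5 z5 e6 h7 hb4 he5 hz5 he6 hh7
    have h1 := isHomogeneous_one (Fin 7) F2
    fin_cases j
    exacts [h1, hb4.mul h1, hz5.mul h1, he5.mul h1, he6.mul h1, hh7.mul h1,
      hb4.mul (hb4.mul h1), hb4.mul (hz5.mul h1), hb4.mul (he5.mul h1), hz5.mul (hz5.mul h1),
      he5.mul (hz5.mul h1), hz5.mul (he6.mul h1), he6.mul (he6.mul h1), he6.mul (hh7.mul h1),
      hh7.mul (hh7.mul h1), hb4.mul (hz5.mul (hz5.mul h1)), hz5.mul (hz5.mul (hz5.mul h1)),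
      he6.mul (he6.mul (hh7.mul h1))]
  exact h _ _ _ _ _ (isHomogeneous_complL 0 4) (isHomogeneous_esymmL 5) (isHomogeneous_complL 2 3)
    (isHomogeneous_esymmL 6) (isHomogeneous_complL 3 4)

/-- The map sending coefficients `Q` to `∑ Q_j(prim) sec_j`. -/
noncomputable def hironakaMap :
    (Fin 18 → MvPolynomial (Fin 7) F2) →ₗ[F2] MvPolynomial (Fin 7) F2 :=
  ∑ j, (LinearMap.mulRight F2 (sec j)) ∘ₗ (aeval prim).toLinearMap ∘ₗ LinearMap.proj j

theorem hironakaMap_apply (Q : Fin 18 → MvPolynomial (Fin 7) F2) :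
    hironakaMap Q = ∑ j, aeval prim (Q j) * sec j := by
  simp [hironakaMap]

theorem ker_hironakaMap : LinearMap.ker hironakaMap = ⊥ :=
  LinearMap.ker_eq_bot'.mpr fun Q hQ => prim_sec_independent Q (by rwa [← hironakaMap_apply])

/-- The invariants of degree `n`. -/
noncomputable def invDeg (n : ℕ) : Submodule F2 (MvPolynomial (Fin 7) F2) :=
  Subalgebra.toSubmodule invP ⊓ homogeneousSubmodule (Fin 7) F2 n

/-- An exponent vector as a finitely supported function. -/
noncomputable def Expo.toFinsupp {n : ℕ} (e : Expo n) : Fin 7 →₀ ℕ :=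
  Finsupp.equivFunOnFinite.symm e.1

theorem mapDomain_toFinsupp {n : ℕ} (σ : fanoGroup) (e : Expo n) :
    e.toFinsupp.mapDomain σ.1 = (σ • e).toFinsupp := by
  ext i
  exact Finsupp.mapDomain_equiv_apply _ _

theorem coeff_smul_expo {n : ℕ} {p : MvPolynomial (Fin 7) F2} (hp : p ∈ invP) (σ : fanoGroup)
    (e : Expo n) : coeff (σ • e).toFinsupp p = coeff e.toFinsupp p := by
  conv_lhs => rw [← rename_of_mem_fanoGroup hp σ.2, ← mapDomain_toFinsupp]
  exact coeff_rename_mapDomain _ σ.1.injective _ _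

/-- The coefficients at representatives of the orbits of exponent vectors. -/
noncomputable def orbitCoeff (n : ℕ) : invDeg n →ₗ[F2] (ExpoOrbit n → F2) :=
  (LinearMap.pi fun o => lcoeff F2 (Expo.toFinsupp o.out)) ∘ₗ (invDeg n).subtype

theorem orbitCoeff_injective (n : ℕ) : Function.Injective (orbitCoeff n) := by
  refine (injective_iff_map_eq_zero _).mpr fun ⟨p, hp, hpn⟩ h => ?_
  refine Subtype.ext (MvPolynomial.ext _ _ fun d => ?_)
  rw [ZeroMemClass.coe_zero, coeff_zero]
  by_contra hd
  have hdn := hpn hd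
  let e : Expo n := ⟨d, by
    rw [← hdn, Finsupp.weight_apply, Finsupp.sum_fintype] <;> simp⟩
  have he : e.toFinsupp = d := Finsupp.ext fun i => rfl
  obtain ⟨σ, hσ⟩ := MulAction.orbitRel_apply.mp
    (Quotient.exact (Quotient.out_eq (Quotient.mk (MulAction.orbitRel fanoGroup (Expo n)) e)))
  simp only at hσ
  apply hd
  have h0 := congrFun h (Quotient.mk _ e)
  change coeff (Expo.toFinsupp (Quotient.out _)) p = 0 at h0
  rw [← hσ, coeff_smul_expo hp, he] at h0
  exact h0

instance (n : ℕ) : FiniteDimensional F2 (invDeg n) :=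
  FiniteDimensional.of_injective _ (orbitCoeff_injective n)

theorem finrank_invDeg_le (n : ℕ) : Module.finrank F2 (invDeg n) ≤ Nat.card (ExpoOrbit n) := by
  have := Fintype.ofFinite (ExpoOrbit n)
  rw [Nat.card_eq_fintype_card, ← Module.finrank_fintype_fun_eq_card F2]
  exact LinearMap.finrank_le_finrank_of_injective (orbitCoeff_injective n)

theorem hironakaMap_mem_invP (Q : Fin 18 → MvPolynomial (Fin 7) F2) : hironakaMap Q ∈ invP := by
  rw [hironakaMap_apply]
  refine sum_mem fun j _ => mul_mem ?_ (sec_mem_invP j)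
  have h : (aeval prim : MvPolynomial (Fin 7) F2 →ₐ[F2] _).range ≤ invP := by
    rw [← Algebra.adjoin_range_eq_range_aeval, Algebra.adjoin_le_iff]
    rintro _ ⟨i, rfl⟩
    exact prim_mem_invP i
  exact h ⟨_, rfl⟩

/-- The coefficients of a product of a monomial in the primary invariants with a secondary one. -/
noncomputable def hironakaMonomial {n : ℕ} (x : HironakaIndex n) :
    Fin 18 → MvPolynomial (Fin 7) F2 :=
  Pi.single x.1 (monomial (Finsupp.equivFunOnFinite.symm x.2.1) 1)

theorem hironakaMap_monomial_mem {n : ℕ} (x : HironakaIndex n) :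
    hironakaMap (hironakaMonomial x) ∈ invDeg n := by
  refine ⟨hironakaMap_mem_invP _, ?_⟩
  obtain ⟨j, α, rfl⟩ := x
  rw [SetLike.mem_coe, mem_homogeneousSubmodule, hironakaMap_apply, Finset.sum_eq_single j]
  · rw [hironakaMonomial, Pi.single_eq_same, aeval_monomial, map_one, one_mul, mul_comm]
    refine (sec_isHomogeneous j).mul ?_
    rw [Finsupp.prod_fintype _ _ (by simp)]
    exact IsHomogeneous.prod _ _ _ fun i _ => by simpa using (prim_isHomogeneous i).pow (α i)
  · intro k _ hk
    rw [hironakaMonomial, Pi.single_eq_of_ne hk, map_zero, zero_mul]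
  · simp

theorem linearIndependent_hironakaMonomial (n : ℕ) :
    LinearIndependent F2 fun x : HironakaIndex n => hironakaMonomial x := by
  have heq : (fun x : HironakaIndex n => hironakaMonomial x) =
      (Pi.basis fun _ : Fin 18 => basisMonomials (Fin 7) F2) ∘
        fun x : HironakaIndex n => ⟨x.1, Finsupp.equivFunOnFinite.symm x.2.1⟩ := by
    funext x
    rw [Function.comp_apply, Pi.basis_apply, coe_basisMonomials, hironakaMonomial]
  rw [heq]
  refine (Module.Basis.linearIndependent _).comp _ ?_
  · rintro ⟨j, α, hα⟩ ⟨k, β, hβ⟩ h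
    simp only [Sigma.mk.injEq, heq_eq_eq, EmbeddingLike.apply_eq_iff_eq] at h
    obtain ⟨rfl, rfl⟩ := h
    rfl

theorem le_range_of_finrank_le {k V W ι : Type*} [Field k] [AddCommGroup V] [Module k V]
    [AddCommGroup W] [Module k W] [Finite ι] {φ : V →ₗ[k] W} (hφ : LinearMap.ker φ = ⊥)
    {N : Submodule k W} [FiniteDimensional k N] {v : ι → V} (hv : LinearIndependent k v)
    (hN : ∀ x, φ (v x) ∈ N) (hcard : Module.finrank k N ≤ Nat.card ι) :
    N ≤ LinearMap.range φ := by
  have := Fintype.ofFinite ι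
  have hle : Submodule.span k (Set.range (φ ∘ v)) ≤ N :=
    Submodule.span_le.mpr (Set.range_subset_iff.mpr hN)
  have hspan := Submodule.eq_of_le_of_finrank_le hle (by
    rwa [finrank_span_eq_card (hv.map' φ hφ), ← Nat.card_eq_fintype_card])
  rw [← hspan, Submodule.span_le]
  rintro _ ⟨x, rfl⟩
  exact LinearMap.mem_range_self φ (v x)

theorem invDeg_le_range (n : ℕ) : invDeg n ≤ LinearMap.range hironakaMap :=
  le_range_of_finrank_le ker_hironakaMap (linearIndependent_hironakaMonomial n)
    hironakaMap_monomial_mem ((finrank_invDeg_le n).trans_eq (card_hironakaIndex n).symm)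

theorem exists_hironakaMap_eq {p : MvPolynomial (Fin 7) F2} (hp : p ∈ invP) :
    ∃ Q, hironakaMap Q = p := by
  rw [← LinearMap.mem_range, ← sum_homogeneousComponent p]
  refine sum_mem fun n _ => invDeg_le_range n ⟨fun τ hτ => ?_, homogeneousComponent_mem _ _⟩
  rw [MvPolynomial.rename_homogeneousComponent, hp τ hτ]

/-- The substitution given by the rows of a matrix. -/
noncomputable def linAct (M : Matrix (Fin 6) (Fin 6) F2) :
    MvPolynomial (Fin 6) F2 →ₐ[F2] MvPolynomial (Fin 6) F2 :=
  aeval fun i => ∑ j, M i j • X j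

/-- The linear forms permuted by the group. -/
noncomputable def orbitForm : Fin 7 → MvPolynomial (Fin 6) F2 :=
  ![X 0, X 1, X 2, X 0 + X 2 + X 5, X 1 + X 2 + X 4, X 0 + X 1 + X 3,
    X 0 + X 1 + X 2 + X 3 + X 4 + X 5]

/-- The projection sending the seven variables to the forms `orbitForm`. -/
noncomputable def toForms : MvPolynomial (Fin 7) F2 →ₐ[F2] MvPolynomial (Fin 6) F2 :=
  aeval orbitForm

/-- An equivariant section of `toForms`. -/
noncomputable def ofForms : MvPolynomial (Fin 6) F2 →ₐ[F2] MvPolynomial (Fin 7) F2 :=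
  aeval ![X 0 + ∑ i, X i, X 1 + ∑ i, X i, X 2 + ∑ i, X i, X 0 + X 1 + X 5 + ∑ i, X i,
    X 1 + X 2 + X 4 + ∑ i, X i, X 0 + X 2 + X 3 + ∑ i, X i]

theorem two_eq_zero_mvPolynomial (n : ℕ) : (2 : MvPolynomial (Fin n) F2) = 0 :=
  CharTwo.two_eq_zero

theorem linAct_toForms_A (p : MvPolynomial (Fin 7) F2) :
    linAct DA6 (toForms p) = toForms (rename permA p) := by
  have h2 := two_eq_zero_mvPolynomial 6
  refine DFunLike.congr_fun (f := (linAct DA6).comp toForms)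
    (g := toForms.comp (rename permA)) (algHom_ext fun i => ?_) p
  fin_cases i <;>
  · simp [linAct, toForms, orbitForm, permA, DA6, Fin.sum_univ_succ]
    try grind

theorem linAct_toForms_B (p : MvPolynomial (Fin 7) F2) :
    linAct DB6 (toForms p) = toForms (rename permB p) := by
  have h2 := two_eq_zero_mvPolynomial 6
  refine DFunLike.congr_fun (f := (linAct DB6).comp toForms)
    (g := toForms.comp (rename permB)) (algHom_ext fun i => ?_) p
  fin_cases i <;>
  · simp [linAct, toForms, orbitForm, permB, DB6, Fin.sum_univ_succ]
    try grind

theorem rename_ofForms_A (p : MvPolynomial (Fin 6) F2) :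
    rename permA (ofForms p) = ofForms (linAct DA6 p) := by
  have h2 := two_eq_zero_mvPolynomial 7
  refine DFunLike.congr_fun (f := (rename permA).comp ofForms)
    (g := ofForms.comp (linAct DA6)) (algHom_ext fun i => ?_) p
  fin_cases i <;>
  · simp [linAct, ofForms, permA, DA6, Fin.sum_univ_succ]
    try grind

theorem rename_ofForms_B (p : MvPolynomial (Fin 6) F2) :
    rename permB (ofForms p) = ofForms (linAct DB6 p) := by
  have h2 := two_eq_zero_mvPolynomial 7
  refine DFunLike.congr_fun (f := (rename permB).comp ofForms)
    (g := ofForms.comp (linAct DB6)) (algHom_ext fun i => ?_) p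
  fin_cases i <;>
  · simp [linAct, ofForms, permB, DB6, Fin.sum_univ_succ]
    try grind

theorem toForms_ofForms (p : MvPolynomial (Fin 6) F2) : toForms (ofForms p) = p := by
  have h2 := two_eq_zero_mvPolynomial 6
  refine DFunLike.congr_fun (f := toForms.comp ofForms) (g := AlgHom.id F2 _)
    (algHom_ext fun i => ?_) p
  fin_cases i <;>
  · simp [toForms, ofForms, orbitForm, Fin.sum_univ_succ]
    try grind

theorem prim_zero : prim 0 = ∑ i, X i := by
  rw [prim_eq]
  change pol (esymmL 1) = _
  have h : (esymmL 1).Perm ((List.finRange 7).map fun i => [i]) := by decide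
  rw [pol, (h.map _).sum_eq, List.map_map, Fin.sum_univ_def]
  simp [Function.comp_def]

theorem toForms_prim_zero : toForms (prim 0) = 0 := by
  have h2 := two_eq_zero_mvPolynomial 6
  rw [prim_zero]
  simp [toForms, orbitForm, Fin.sum_univ_succ]
  grind

theorem prim_zero_dvd_sub (p : MvPolynomial (Fin 7) F2) : prim 0 ∣ p - ofForms (toForms p) := by
  rw [← Ideal.mem_span_singleton, ← Ideal.Quotient.eq]
  refine DFunLike.congr_fun (f := Ideal.Quotient.mkₐ F2 (Ideal.span {prim 0}))
    (g := (Ideal.Quotient.mkₐ F2 (Ideal.span {prim 0})).comp (ofForms.comp toForms))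
    (algHom_ext fun i => ?_) p
  have h2 := two_eq_zero_mvPolynomial 7
  refine Ideal.Quotient.eq.mpr (Ideal.mem_span_singleton.mpr ⟨1, ?_⟩)
  rw [prim_zero]
  fin_cases i <;>
  · simp [toForms, ofForms, orbitForm, Fin.sum_univ_succ]
    grind

theorem exists_mem_closure_of_det_ne_zero (M : Matrix (Fin 3) (Fin 3) F2) (hM : M.det ≠ 0) :
    ∃ g ∈ Subgroup.closure {Agen, Bgen}, (g : Matrix (Fin 3) (Fin 3) F2) = M := by
  have hword : ∀ w : List (Fin 2), (w.map ![Agen, Bgen]).prod ∈ Subgroup.closure {Agen, Bgen} := by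
    refine fun w => list_prod_mem fun g hg => ?_
    obtain ⟨i, -, rfl⟩ := List.mem_map.mp hg
    refine Subgroup.subset_closure ?_
    fin_cases i
    exacts [.inl rfl, .inr rfl]
  have htrans : ∀ i j : Fin 3, i ≠ j →
      (((![![[], [0, 1, 1, 0, 1, 0, 1, 1, 0, 1], [0]],
        ![[1, 0, 1, 1], [], [0, 1, 0, 1, 1, 0, 1, 0, 1, 1]],
        ![[1, 0, 1, 0, 1, 1, 0, 1, 0, 1], [1, 1, 0, 1], []]] :
        Fin 3 → Fin 3 → List (Fin 2)) i j).map
        ![Agen.1, Bgen.1]).prod = Matrix.transvection i j 1 := by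
    decide +kernel
  refine Matrix.diagonal_transvection_induction_of_det_ne_zero
    (fun M => ∃ g ∈ Subgroup.closure {Agen, Bgen}, (g : Matrix (Fin 3) (Fin 3) F2) = M) M hM
    ?_ ?_ ?_
  · intro d hd
    have hd1 : d = 1 := funext fun i => by
      have h01 : ∀ x : F2, x ≠ 0 → x = 1 := by decide
      rw [Matrix.det_diagonal, Finset.prod_ne_zero_iff] at hd
      exact h01 _ (hd i (Finset.mem_univ i))
    exact ⟨1, one_mem _, by rw [hd1]; exact Matrix.diagonal_one.symm⟩
  · rintro ⟨i, j, hij, c⟩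
    have hc : ∀ c : F2, c = 0 ∨ c = 1 := by decide
    obtain rfl | rfl := hc c
    · exact ⟨1, one_mem _, (Matrix.transvection_zero i j).symm⟩
    · obtain ⟨w, hw⟩ : ∃ w : List (Fin 2), (w.map ![Agen.1, Bgen.1]).prod =
          Matrix.transvection i j 1 := ⟨_, htrans i j hij⟩
      refine ⟨_, hword w, Eq.trans ?_ hw⟩
      rw [← Units.coeHom_apply, map_list_prod, List.map_map]
      congr 2
      funext k
      fin_cases k <;> rfl
  · rintro _ _ - - ⟨g, hg, rfl⟩ ⟨h, hh, rfl⟩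
    exact ⟨g * h, mul_mem hg hh, rfl⟩

theorem closure_Agen_Bgen : Subgroup.closure {Agen, Bgen} = ⊤ := by
  refine (Subgroup.eq_top_iff' _).mpr fun g => ?_
  obtain ⟨h, hh, hg⟩ := exists_mem_closure_of_det_ne_zero g g.det.ne_zero
  rwa [← Units.ext hg]

theorem polyAct_mul (D : G3 →* GL (Fin 6) F2) (σ τ : G3) (p : MvPolynomial (Fin 6) F2) :
    polyAct D (σ * τ) p = polyAct D τ (polyAct D σ p) := by
  refine DFunLike.congr_fun (g := (polyAct D τ).comp (polyAct D σ)) (algHom_ext fun i => ?_) p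
  simp only [polyAct, AlgHom.comp_apply, aeval_X, map_sum, map_smul, map_mul, Units.val_mul,
    Matrix.mul_apply, Finset.sum_smul, Finset.smul_sum, mul_smul]
  exact Finset.sum_comm

theorem polyAct_one (D : G3 →* GL (Fin 6) F2) (p : MvPolynomial (Fin 6) F2) :
    polyAct D 1 p = p := by
  refine DFunLike.congr_fun (g := AlgHom.id F2 _) (algHom_ext fun i => ?_) p
  simp [polyAct, Matrix.one_apply]

theorem mem_invG_iff (D : G3 →* GL (Fin 6) F2) (p : MvPolynomial (Fin 6) F2) :
    p ∈ invG D ↔ polyAct D Agen p = p ∧ polyAct D Bgen p = p := by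
  refine ⟨fun h => ⟨h _ trivial, h _ trivial⟩, fun ⟨hA, hB⟩ σ _ => ?_⟩
  have hσ : σ ∈ Subgroup.closure {Agen, Bgen} := closure_Agen_Bgen ▸ Subgroup.mem_top σ
  induction hσ using Subgroup.closure_induction with
  | mem x hx =>
    obtain h | h := hx
    · rw [h, hA]
    · rw [Set.mem_singleton_iff.mp h, hB]
  | one => exact polyAct_one D p
  | mul x y _ _ hx hy => rw [polyAct_mul, hx trivial, hy trivial]
  | inv x _ hx =>
    conv_lhs => rw [← hx trivial]
    rw [← polyAct_mul, mul_inv_cancel, polyAct_one]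

theorem polyAct_eq_linAct {D : G3 →* GL (Fin 6) F2} {σ : G3} {M : Matrix (Fin 6) (Fin 6) F2}
    (h : (D σ : Matrix (Fin 6) (Fin 6) F2) = M) : polyAct D σ = linAct M := by
  rw [polyAct, h, linAct]

theorem toForms_mem_invG {D : G3 →* GL (Fin 6) F2}
    (hA : (D Agen : Matrix (Fin 6) (Fin 6) F2) = DA6)
    (hB : (D Bgen : Matrix (Fin 6) (Fin 6) F2) = DB6)
    {p : MvPolynomial (Fin 7) F2} (hp : p ∈ invP) :
    toForms p ∈ invG D := by
  rw [mem_invG_iff, polyAct_eq_linAct hA, polyAct_eq_linAct hB, linAct_toForms_A, linAct_toForms_B,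
    hp permA (by simp), hp permB (by simp)]
  exact ⟨rfl, rfl⟩

theorem ofForms_mem_invP {D : G3 →* GL (Fin 6) F2}
    (hA : (D Agen : Matrix (Fin 6) (Fin 6) F2) = DA6)
    (hB : (D Bgen : Matrix (Fin 6) (Fin 6) F2) = DB6)
    {p : MvPolynomial (Fin 6) F2} (hp : p ∈ invG D) :
    ofForms p ∈ invP := by
  rw [mem_invG_iff, polyAct_eq_linAct hA, polyAct_eq_linAct hB] at hp
  intro τ hτ
  obtain rfl | rfl : τ = permA ∨ τ = permB := by simpa using hτ
  · rw [rename_ofForms_A, hp.1]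
  · rw [rename_ofForms_B, hp.2]

/-- The primary invariants of `S[W'^*]^G`. -/
noncomputable def primForm (i : Fin 6) : MvPolynomial (Fin 6) F2 := toForms (prim i.succ)

/-- The secondary invariants of `S[W'^*]^G`. -/
noncomputable def secForm (j : Fin 18) : MvPolynomial (Fin 6) F2 := toForms (sec j)

/-- The substitution of zero for the first of seven variables. -/
noncomputable def dropZero : MvPolynomial (Fin 7) F2 →ₐ[F2] MvPolynomial (Fin 6) F2 :=
  aeval (Fin.cons 0 X)

theorem dropZero_rename_succ (Q : MvPolynomial (Fin 6) F2) :
    dropZero (rename Fin.succ Q) = Q := by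
  rw [dropZero, aeval_rename, Fin.cons_comp_succ, aeval_X_left_apply]

theorem toForms_aeval_prim (Q : MvPolynomial (Fin 7) F2) :
    toForms (aeval prim Q) = aeval primForm (dropZero Q) := by
  refine DFunLike.congr_fun (f := toForms.comp (aeval prim))
    (g := (aeval primForm).comp dropZero) (algHom_ext fun i => ?_) Q
  refine Fin.cases ?_ (fun i => ?_) i
  · simp [dropZero, toForms_prim_zero]
  · simp [dropZero, primForm]

theorem toForms_hironakaMap (Q : Fin 18 → MvPolynomial (Fin 7) F2) :
    toForms (hironakaMap Q) = ∑ j, aeval primForm (dropZero (Q j)) * secForm j := by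
  simp only [hironakaMap_apply, map_sum, map_mul, toForms_aeval_prim, secForm]

theorem exists_sum_eq_of_ofForms_mem {p : MvPolynomial (Fin 6) F2} (hp : ofForms p ∈ invP) :
    ∃ Q : Fin 18 → MvPolynomial (Fin 6) F2, ∑ j, aeval primForm (Q j) * secForm j = p := by
  obtain ⟨Q, hQ⟩ := exists_hironakaMap_eq hp
  exact ⟨fun j => dropZero (Q j), by rw [← toForms_hironakaMap, hQ, toForms_ofForms]⟩

theorem prim_ne_zero (i : Fin 7) : prim i ≠ 0 := by
  intro h
  have := congrFun (prim_sec_independent (Pi.single 0 (X i)) (by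
    rw [Finset.sum_eq_single 0] <;> simp +contextual [h])) 0
  simp at this

theorem eq_zero_of_sum_aeval_primForm {Q : Fin 18 → MvPolynomial (Fin 6) F2}
    (hQ : ∑ j, aeval primForm (Q j) * secForm j = 0) : Q = 0 := by
  set P := hironakaMap fun j => rename Fin.succ (Q j) with hP
  have hP0 : toForms P = 0 := by
    rw [hP, toForms_hironakaMap]
    simpa only [dropZero_rename_succ]
  obtain ⟨t, ht⟩ : prim 0 ∣ P := by simpa [hP0] using prim_zero_dvd_sub P
  have htP : t ∈ invP := fun τ hτ => by
    have h := hironakaMap_mem_invP (fun j => rename Fin.succ (Q j)) τ hτ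
    rw [← hP, ht, map_mul, prim_mem_invP 0 τ hτ] at h
    exact mul_left_cancel₀ (prim_ne_zero 0) h
  obtain ⟨R, rfl⟩ := exists_hironakaMap_eq htP
  have hR : prim 0 * hironakaMap R = hironakaMap fun j => X 0 * R j := by
    simp only [hironakaMap_apply, map_mul, aeval_X, Finset.mul_sum, mul_assoc]
  have hQR := LinearMap.ker_eq_bot.mp ker_hironakaMap (hP.symm.trans (ht.trans hR))
  funext j
  rw [← dropZero_rename_succ (Q j), congrFun hQR j, map_mul, dropZero, aeval_X, Fin.cons_zero,
    zero_mul, Pi.zero_apply]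

theorem isHomogeneous_toForms {p : MvPolynomial (Fin 7) F2} {n : ℕ} (hp : p.IsHomogeneous n) :
    (toForms p).IsHomogeneous n := by
  have h : ∀ i, (orbitForm i).IsHomogeneous 1 := by
    have hX := isHomogeneous_X (σ := Fin 6) F2
    intro i
    fin_cases i
    exacts [hX 0, hX 1, hX 2, ((hX 0).add (hX 2)).add (hX 5), ((hX 1).add (hX 2)).add (hX 4),
      ((hX 0).add (hX 1)).add (hX 3),
      (((((hX 0).add (hX 1)).add (hX 2)).add (hX 3)).add (hX 4)).add (hX 5)]
  rw [← one_mul n]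
  exact hp.aeval orbitForm h

theorem sec_zero : sec 0 = 1 := rfl

theorem exists_basis_adjoin {k R ι κ : Type*} [Field k] [CommRing R] [Algebra k R] [Fintype κ]
    {f : ι → R} {g : κ → R}
    (hind : ∀ Q : κ → MvPolynomial ι k, ∑ j, aeval f (Q j) * g j = 0 → Q = 0)
    (hspan : ∀ p, ∃ Q : κ → MvPolynomial ι k, ∑ j, aeval f (Q j) * g j = p) :
    ∃ b : Module.Basis κ (Algebra.adjoin k (Set.range f)) R, ∀ j, b j = g j := by
  have hmem : ∀ Q : MvPolynomial ι k, aeval f Q ∈ Algebra.adjoin k (Set.range f) := fun Q => by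
    rw [Algebra.adjoin_range_eq_range_aeval]
    exact ⟨Q, rfl⟩
  have hli : LinearIndependent (Algebra.adjoin k (Set.range f)) g := by
    refine Fintype.linearIndependent_iff.mpr fun c hc j => ?_
    have hex : ∀ j, ∃ Q : MvPolynomial ι k, aeval f Q = (c j : R) := fun j =>
      (Algebra.adjoin_range_eq_range_aeval k f).le (c j).2
    choose Q hQ using hex
    have h0 := hind Q (by simp only [hQ]; exact hc)
    exact Subtype.ext (by rw [← hQ, h0, Pi.zero_apply, map_zero, ZeroMemClass.coe_zero])
  have htop : ⊤ ≤ Submodule.span (Algebra.adjoin k (Set.range f)) (Set.range g) := by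
    intro p _
    obtain ⟨Q, rfl⟩ := hspan p
    refine sum_mem fun j _ => ?_
    exact Submodule.smul_mem _ (⟨_, hmem (Q j)⟩ : Algebra.adjoin k (Set.range f))
      (Submodule.subset_span ⟨j, rfl⟩)
  exact ⟨.mk hli htop, fun j => Module.Basis.mk_apply hli htop j⟩

/-- There exist a homogeneous system of parameters `f₁, …, f₆` of
`S[W'^*]^G` of degrees `2, 3, 3, 4, 6, 7` and homogeneous invariants
`g₁, …, g₁₈ ∈ S[W'^*]^G` with `g₁ = 1`, of degrees
`0, 4, 5, 5, 6, 7, 8, 9, 9, 10, 10, 11, 12, 13, 14, 14, 15, 19` respectively, such that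
`S[W'^*]^G` is a free `𝔽₂[f₁, …, f₆]`-module with basis `{g₁, …, g₁₈}`. -/
theorem stmt15 (D : G3 →* GL (Fin 6) F2)
    (hA : (D Agen : Matrix (Fin 6) (Fin 6) F2) = DA6)
    (hB : (D Bgen : Matrix (Fin 6) (Fin 6) F2) = DB6) :
    ∃ f : Fin 6 → (invG D),
      AlgebraicIndependent F2 f ∧
      (∀ i, (f i : MvPolynomial (Fin 6) F2).IsHomogeneous (![2, 3, 3, 4, 6, 7] i)) ∧
      Module.Finite (Algebra.adjoin F2 (Set.range f)) (invG D) ∧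
      ∃ g : Fin 18 → (invG D),
        g 0 = 1 ∧
        (∀ j, (g j : MvPolynomial (Fin 6) F2).IsHomogeneous
          (![0, 4, 5, 5, 6, 7, 8, 9, 9, 10, 10, 11, 12, 13, 14, 14, 15, 19] j)) ∧
        ∃ b : Module.Basis (Fin 18) (Algebra.adjoin F2 (Set.range f)) (invG D),
          ∀ j, b j = g j := by
  let f : Fin 6 → invG D := fun i => ⟨primForm i, toForms_mem_invG hA hB (prim_mem_invP _)⟩
  let g : Fin 18 → invG D := fun j => ⟨secForm j, toForms_mem_invG hA hB (sec_mem_invP _)⟩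
  have hg0 : g 0 = 1 := Subtype.ext (by
    change toForms (sec 0) = 1
    rw [sec_zero, map_one])
  have hcoe : ∀ Q : MvPolynomial (Fin 6) F2, ((aeval f Q : invG D) : MvPolynomial (Fin 6) F2)
      = aeval primForm Q := fun Q =>
    DFunLike.congr_fun (comp_aeval f (invG D).val) Q
  have hsum : ∀ Q : Fin 18 → MvPolynomial (Fin 6) F2,
      ((∑ j, aeval f (Q j) * g j : invG D) : MvPolynomial (Fin 6) F2)
        = ∑ j, aeval primForm (Q j) * secForm j := fun Q => by
    simp only [AddSubmonoidClass.coe_finsetSum, MulMemClass.coe_mul, hcoe, g]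
  have hind : ∀ Q : Fin 18 → MvPolynomial (Fin 6) F2, ∑ j, aeval f (Q j) * g j = 0 → Q = 0 :=
    fun Q hQ => eq_zero_of_sum_aeval_primForm (by rw [← hsum, hQ, ZeroMemClass.coe_zero])
  have hspan : ∀ p, ∃ Q : Fin 18 → MvPolynomial (Fin 6) F2, ∑ j, aeval f (Q j) * g j = p :=
    fun p => by
      obtain ⟨Q, hQ⟩ := exists_sum_eq_of_ofForms_mem (ofForms_mem_invP hA hB p.2)
      exact ⟨Q, Subtype.ext ((hsum Q).trans hQ)⟩
  obtain ⟨b, hb⟩ := exists_basis_adjoin hind hspan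
  refine ⟨f, ?_, fun i => ?_, .of_basis b, g, hg0, fun j => ?_, b, hb⟩
  · refine (injective_iff_map_eq_zero _).mpr fun Q hQ => ?_
    have h := congrFun (hind (Pi.single 0 Q) (by
      rw [Finset.sum_eq_single 0 (fun j _ hj => by rw [Pi.single_eq_of_ne hj, map_zero, zero_mul])
        (by simp), Pi.single_eq_same, hQ, zero_mul])) 0
    rwa [Pi.single_eq_same] at h
  · have h := isHomogeneous_toForms (prim_isHomogeneous i.succ)
    fin_cases i <;> exact h
  · exact isHomogeneous_toForms (sec_isHomogeneous j)
end
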